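/- Let d ≥ 1 and let k ≥ 1 be an integer. Every locally compact subset of ℝ^d that is C^k homogeneous is a C^k submanifold of ℝ^d. -/

import Mathlib

open Metric Set

noncomputable section

/-- `ℝ^d` as a Euclidean space. -/
abbrev Euc (d : ℕ) := EuclideanSpace ℝ (Fin d)

/-- `H` is a `C^k` diffeomorphism from the open set `U` onto the open set `V`,
with inverse `H'`. -/
def IsCkDiffeoOn {E F : Type*} [NormedAddCommGroup E] [NormedSpace ℝ E]
    [NormedAddCommGroup F] [NormedSpace ℝ F]
    (k : ℕ) (H : E → F) (H' : F → E) (U : Set E) (V : Set F) : Prop :=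
  IsOpen U ∧ IsOpen V ∧ ContDiffOn ℝ k H U ∧ ContDiffOn ℝ k H' V ∧
    Set.MapsTo H U V ∧ Set.MapsTo H' V U ∧
    (∀ x ∈ U, H' (H x) = x) ∧ (∀ y ∈ V, H (H' y) = y)

/-- `N` is `C^k` homogeneous in `E`: any point of `N` can be taken to any other point of `N`
by a `C^k` diffeomorphism between open neighborhoods preserving `N`. -/
def CkHomogeneous {E : Type*} [NormedAddCommGroup E] [NormedSpace ℝ E]
    (k : ℕ) (N : Set E) : Prop :=
  ∀ x ∈ N, ∀ y ∈ N, ∃ (U V : Set E) (H H' : E → E),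
    IsCkDiffeoOn k H H' U V ∧ x ∈ U ∧ y ∈ V ∧ H x = y ∧ H '' (N ∩ U) = N ∩ V

/-- `N ⊆ ℝ^d` is a `C^k` submanifold of `ℝ^d`: near each of its points, `N` can be
straightened to a coordinate plane `ℝ^j × {0}` by a `C^k` diffeomorphism. -/
def IsCkSubmanifold (k d : ℕ) (N : Set (Euc d)) : Prop :=
  ∀ p ∈ N, ∃ (U V : Set (Euc d)) (φ φ' : Euc d → Euc d) (j : ℕ),
    IsCkDiffeoOn k φ φ' U V ∧ p ∈ U ∧
    φ '' (N ∩ U) = V ∩ {x : Euc d | ∀ i : Fin d, j ≤ (i : ℕ) → x i = 0}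

/-- `N` is locally compact: every point of `N` has a compact neighborhood in the
subspace topology. -/
def LocallyCompactSubset {E : Type*} [NormedAddCommGroup E] (N : Set E) : Prop :=
  ∀ x ∈ N, ∃ K ⊆ N, IsCompact K ∧ ∃ U : Set E, IsOpen U ∧ x ∈ U ∧ N ∩ U ⊆ K

/-!
Call a functional `l` a Fréchet normal of `N` at `p` if `l (x - p) ≤ o(‖x - p‖)` as `x → p` in `N`.
Quantified, this is a countable family of closed conditions on `p`, so by Baire's theorem a locally
compact `N` has a point `p` at which every Fréchet normal kills all limits of directions of chords
of `N` shrinking to `p` (the paratingent cone), and at which these annihilators are upper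
semicontinuous. Project `N` linearly onto the span of the paratingent cone at `p`. Near `p` the
projection is bi-Lipschitz on `N`, and its image is a neighbourhood: a ball touching the image from
outside would produce a unit Fréchet normal near `p`, which by homogeneity kills the paratingent
cone there, and a limit of such normals would kill the span at `p`. So `N` is a Lipschitz graph near
`p`; since homogeneity makes the dimension of the paratingent span constant, the graph is `C^1`.

For higher regularity, the frames tangent to a `C^1` piece of a `C^(k+1)` homogeneous set again form
a locally compact set, which is `C^k` homogeneous because derivatives of diffeomorphisms and changes
of frame act transitively on it. By induction this set of frames is somewhere a `C^k` graph, which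
makes the derivative of the parametrisation `C^k`, and `N` itself somewhere a `C^(k+1)` graph. One
point where `N` can be straightened suffices, by homogeneity.
-/

section Development

open Filter Topology Asymptotics

variable {E F G : Type*} [NormedAddCommGroup E] [NormedSpace ℝ E]
  [NormedAddCommGroup F] [NormedSpace ℝ F] [NormedAddCommGroup G] [NormedSpace ℝ G]

/-! ### Local diffeomorphisms -/

namespace IsCkDiffeoOn

variable {k : ℕ} {H : E → F} {H' : F → E} {U : Set E} {V : Set F}

theorem isOpen_source (h : IsCkDiffeoOn k H H' U V) : IsOpen U := h.1

theorem mapsTo (h : IsCkDiffeoOn k H H' U V) : MapsTo H U V := h.2.2.2.2.1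

theorem left_inv (h : IsCkDiffeoOn k H H' U V) {x : E} (hx : x ∈ U) : H' (H x) = x :=
  h.2.2.2.2.2.2.1 x hx

theorem symm (h : IsCkDiffeoOn k H H' U V) : IsCkDiffeoOn k H' H V U :=
  let ⟨hU, hV, hH, hH', hUV, hVU, hleft, hright⟩ := h
  ⟨hV, hU, hH', hH, hVU, hUV, hright, hleft⟩

theorem trans {I : F → G} {I' : G → F} {V₁ : Set F} {X : Set G}
    (h : IsCkDiffeoOn k H H' U V) (hI : IsCkDiffeoOn k I I' V₁ X) :
    IsCkDiffeoOn k (I ∘ H) (H' ∘ I') (U ∩ H ⁻¹' V₁) (X ∩ I' ⁻¹' V) := by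
  obtain ⟨hU, hV, hH, hH', hUV, hVU, hleft, hright⟩ := h
  obtain ⟨hV₁, hX, hI, hI', hVX, hXV, hIleft, hIright⟩ := hI
  refine ⟨hH.continuousOn.isOpen_inter_preimage hU hV₁,
    hI'.continuousOn.isOpen_inter_preimage hX hV,
    hI.comp (hH.mono inter_subset_left) fun _ hx => hx.2,
    hH'.comp (hI'.mono inter_subset_left) fun _ hz => hz.2,
    fun x hx => ⟨hVX hx.2, ?_⟩, fun z hz => ⟨hVU hz.2, ?_⟩, fun x hx => ?_, fun z hz => ?_⟩
  · simpa only [mem_preimage, Function.comp_apply, hIleft _ hx.2] using hUV hx.1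
  · simpa only [mem_preimage, Function.comp_apply, hright _ hz.2] using hXV hz.1
  · simp only [Function.comp_apply, hIleft _ hx.2, hleft _ hx.1]
  · simp only [Function.comp_apply, hright _ hz.2, hIright _ hz.1]

theorem of_continuousLinearEquiv (e : E ≃L[ℝ] F) : IsCkDiffeoOn k e e.symm univ univ :=
  ⟨isOpen_univ, isOpen_univ, e.contDiff.contDiffOn, e.symm.contDiff.contDiffOn,
    mapsTo_univ _ _, mapsTo_univ _ _, fun x _ => e.symm_apply_apply x,
    fun y _ => e.apply_symm_apply y⟩

theorem of_le {n : ℕ} (h : IsCkDiffeoOn n H H' U V) (hkn : k ≤ n) : IsCkDiffeoOn k H H' U V :=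
  let ⟨hU, hV, hH, hH', hrest⟩ := h
  ⟨hU, hV, hH.of_le (mod_cast hkn), hH'.of_le (mod_cast hkn), hrest⟩

theorem inter_preimage (h : IsCkDiffeoOn k H H' U V) {O : Set E} {O' : Set F} (hO : IsOpen O)
    (hO' : IsOpen O') :
    IsCkDiffeoOn k H H' (U ∩ (O ∩ H ⁻¹' O')) (V ∩ (O' ∩ H' ⁻¹' O)) := by
  obtain ⟨hU, hV, hH, hH', hUV, hVU, hleft, hright⟩ := h
  refine ⟨?_, ?_, hH.mono inter_subset_left, hH'.mono inter_subset_left,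
    fun x hx => ⟨hUV hx.1, hx.2.2, ?_⟩, fun y hy => ⟨hVU hy.1, hy.2.2, ?_⟩,
    fun x hx => hleft x hx.1, fun y hy => hright y hy.1⟩
  · rw [inter_left_comm]
    exact hO.inter (hH.continuousOn.isOpen_inter_preimage hU hO')
  · rw [inter_left_comm]
    exact hO'.inter (hH'.continuousOn.isOpen_inter_preimage hV hO)
  · simpa only [mem_preimage, hleft x hx.1] using hx.2.1
  · simpa only [mem_preimage, hright y hy.1] using hy.2.1

theorem image_inter_eq_iff (h : IsCkDiffeoOn k H H' U V) {N : Set E} {M : Set F} :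
    H '' (N ∩ U) = M ∩ V ↔ ∀ x ∈ U, x ∈ N ↔ H x ∈ M := by
  obtain ⟨-, -, -, -, hUV, hVU, hleft, hright⟩ := h
  constructor
  · refine fun himage x hx => ⟨fun hxN => ?_, fun hxM => ?_⟩
    · exact (himage.subset (mem_image_of_mem H ⟨hxN, hx⟩)).1
    · obtain ⟨y, ⟨hyN, hyU⟩, hyx⟩ := himage.superset ⟨hxM, hUV hx⟩
      rwa [← hleft x hx, ← hyx, hleft y hyU]
  · refine fun hiff => Subset.antisymm ?_ fun y hy => ?_
    · rintro _ ⟨x, ⟨hxN, hxU⟩, rfl⟩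
      exact ⟨(hiff x hxU).1 hxN, hUV hxU⟩
    · refine ⟨H' y, ⟨(hiff _ (hVU hy.2)).2 ?_, hVU hy.2⟩, hright y hy.2⟩
      rw [hright y hy.2]
      exact hy.1

theorem contDiffAt (h : IsCkDiffeoOn k H H' U V) {x : E} (hx : x ∈ U) : ContDiffAt ℝ k H x :=
  h.2.2.1.contDiffAt (h.isOpen_source.mem_nhds hx)

theorem fderiv_symm_comp_fderiv (h : IsCkDiffeoOn k H H' U V) (hk : k ≠ 0) {x : E} (hx : x ∈ U) :
    (fderiv ℝ H' (H x)).comp (fderiv ℝ H x) = ContinuousLinearMap.id ℝ E := by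
  have hH := (h.contDiffAt hx).differentiableAt (mod_cast hk)
  have hH' := (h.symm.contDiffAt (h.mapsTo hx)).differentiableAt (mod_cast hk)
  have hcomp : H' ∘ H =ᶠ[𝓝 x] id := by
    filter_upwards [h.isOpen_source.mem_nhds hx] with y hy using h.left_inv hy
  rw [← fderiv_comp x hH' hH, hcomp.fderiv_eq, fderiv_id]

theorem fderiv_comp_fderiv_symm (h : IsCkDiffeoOn k H H' U V) (hk : k ≠ 0) {x : E} (hx : x ∈ U) :
    (fderiv ℝ H x).comp (fderiv ℝ H' (H x)) = ContinuousLinearMap.id ℝ F := by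
  simpa only [h.left_inv hx] using
    h.symm.fderiv_symm_comp_fderiv hk (h.mapsTo hx)

theorem hasStrictFDerivAt (h : IsCkDiffeoOn k H H' U V) (hk : k ≠ 0) {x : E} (hx : x ∈ U) :
    HasStrictFDerivAt H (fderiv ℝ H x) x :=
  (h.contDiffAt hx).hasStrictFDerivAt (mod_cast hk)

theorem fderiv_injective (h : IsCkDiffeoOn k H H' U V) (hk : k ≠ 0) {x : E} (hx : x ∈ U) :
    Function.Injective (fderiv ℝ H x) :=
  Function.LeftInverse.injective fun v =>
    DFunLike.congr_fun (h.fderiv_symm_comp_fderiv hk hx) v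

theorem tendsto_nhdsWithin (h : IsCkDiffeoOn k H H' U V) {N : Set E} {M : Set F}
    (hNM : ∀ x ∈ U, x ∈ N ↔ H x ∈ M) {x : E} (hx : x ∈ U) :
    Tendsto H (𝓝[N] x) (𝓝[M] (H x)) := by
  refine tendsto_nhdsWithin_iff.2
    ⟨(h.contDiffAt hx).continuousAt.tendsto.mono_left nhdsWithin_le_nhds, ?_⟩
  filter_upwards [self_mem_nhdsWithin, mem_nhdsWithin_of_mem_nhds (h.isOpen_source.mem_nhds hx)]
    with y hyN hyU using (hNM y hyU).1 hyN

end IsCkDiffeoOn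

theorem ckHomogeneous_iff {k : ℕ} {N : Set E} :
    CkHomogeneous k N ↔ ∀ x ∈ N, ∀ y ∈ N, ∃ (U V : Set E) (H H' : E → E),
      IsCkDiffeoOn k H H' U V ∧ x ∈ U ∧ H x = y ∧ ∀ z ∈ U, z ∈ N ↔ H z ∈ N := by
  constructor
  · intro hN x hx y hy
    obtain ⟨U, V, H, H', hH, hxU, -, hxy, himage⟩ := hN x hx y hy
    exact ⟨U, V, H, H', hH, hxU, hxy, hH.image_inter_eq_iff.1 himage⟩
  · intro hN x hx y hy
    obtain ⟨U, V, H, H', hH, hxU, hxy, hiff⟩ := hN x hx y hy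
    exact ⟨U, V, H, H', hH, hxU, hxy ▸ hH.mapsTo hxU, hxy, hH.image_inter_eq_iff.2 hiff⟩

theorem CkHomogeneous.of_le {k n : ℕ} {N : Set E} (hN : CkHomogeneous n N) (hkn : k ≤ n) :
    CkHomogeneous k N := fun x hx y hy =>
  let ⟨U, V, H, H', hH, hrest⟩ := hN x hx y hy
  ⟨U, V, H, H', hH.of_le hkn, hrest⟩

theorem CkHomogeneous.inter {k : ℕ} {N : Set E} (hN : CkHomogeneous k N) {O : Set E}
    (hO : IsOpen O) : CkHomogeneous k (N ∩ O) := by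
  refine ckHomogeneous_iff.2 fun x hx y hy => ?_
  obtain ⟨U, V, H, H', hH, hxU, rfl, hiff⟩ := ckHomogeneous_iff.1 hN x hx.1 y hy.1
  refine ⟨_, _, H, H', hH.inter_preimage hO hO, ⟨hxU, hx.2, hy.2⟩, rfl, fun z hz => ?_⟩
  exact and_congr (hiff z hz.1) (iff_of_true hz.2.1 hz.2.2)

section Paratingent

/-! ### Paratingent spaces and Fréchet normals -/

theorem isLittleO_of_forall_dual {α V W : Type*} [NormedAddCommGroup V] [NormedSpace ℝ V]
    [FiniteDimensional ℝ V] [SeminormedAddCommGroup W] {f : Filter α} {w : α → V} {h : α → W}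
    (hw : ∀ l : V →L[ℝ] ℝ, (fun x => l (w x)) =o[f] h) : w =o[f] h := by
  let e : V ≃L[ℝ] (Fin (Module.finrank ℝ V) → ℝ) :=
    (Module.finBasis ℝ V).equivFun.toContinuousLinearEquiv
  have hcoord : (fun x => e (w x)) =o[f] h := isLittleO_pi.2 fun i =>
    hw ((ContinuousLinearMap.proj i).comp (e : V →L[ℝ] (Fin (Module.finrank ℝ V) → ℝ)))
  exact (e.isBigO_comp_rev w f).trans_isLittleO hcoord

/-- The functionals that annihilate the paratingent cone of `N` at `p`, that is, the limits of
directions of chords joining two points of `N` which both tend to `p`. -/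
def paratingentAnnihilator (N : Set E) (p : E) : Submodule ℝ (E →L[ℝ] ℝ) where
  carrier := {l | (fun z : E × E => l (z.1 - z.2)) =o[𝓝[N ×ˢ N] (p, p)] fun z => z.1 - z.2}
  zero_mem' := isLittleO_zero _ _
  add_mem' hl hl' := hl.add hl'
  smul_mem' c _ hl := hl.const_mul_left c

/-- The linear span of the paratingent cone of `N` at `p`, defined by duality. For a `C^1`
submanifold this is the tangent space. -/
def paratingentSpan (N : Set E) (p : E) : Submodule ℝ E :=
  ⨅ l ∈ paratingentAnnihilator N p, l.ker

/-- `l` is an outer normal at `p` in the sense of Fréchet: `l (x - p)` is bounded above by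
`o(‖x - p‖)` as `x → p` in `N`. -/
def IsFrechetNormal (N : Set E) (p : E) (l : E →L[ℝ] ℝ) : Prop :=
  (fun x => max (l (x - p)) 0) =o[𝓝[N] p] fun x => x - p

variable {N : Set E} {p : E} {l : E →L[ℝ] ℝ}

theorem mem_paratingentAnnihilator : l ∈ paratingentAnnihilator N p ↔
    (fun z : E × E => l (z.1 - z.2)) =o[𝓝[N ×ˢ N] (p, p)] fun z => z.1 - z.2 := Iff.rfl

theorem mem_paratingentSpan {v : E} :
    v ∈ paratingentSpan N p ↔ ∀ l ∈ paratingentAnnihilator N p, l v = 0 := by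
  simp [paratingentSpan, Submodule.mem_iInf]

theorem isFrechetNormal_iff : IsFrechetNormal N p l ↔
    ∀ ε > 0, ∀ᶠ x in 𝓝[N] p, l (x - p) ≤ ε * ‖x - p‖ := by
  refine isLittleO_iff.trans (forall₂_congr fun ε hε => eventually_congr (.of_forall fun x => ?_))
  rw [Real.norm_of_nonneg (le_max_right _ _), max_le_iff, and_iff_left (by positivity)]

theorem mem_paratingentAnnihilator_iff_forall_mem_paratingentSpan [FiniteDimensional ℝ E] :
    l ∈ paratingentAnnihilator N p ↔ ∀ v ∈ paratingentSpan N p, l v = 0 := by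
  refine ⟨fun hl v hv => mem_paratingentSpan.1 hv l hl, fun hl => ?_⟩
  let toDual : (E →L[ℝ] ℝ) ≃ₗ[ℝ] Module.Dual ℝ E := LinearMap.toContinuousLinearMap.symm
  let S : Submodule ℝ (Module.Dual ℝ E) := (paratingentAnnihilator N p).map toDual.toLinearMap
  have hmem : toDual l ∈ S.dualCoannihilator.dualAnnihilator := by
    refine (Submodule.mem_dualAnnihilator _).2 fun v hv =>
      hl v (mem_paratingentSpan.2 fun m hm => ?_)
    exact (Submodule.mem_dualCoannihilator v).1 hv _ (Submodule.mem_map_of_mem hm)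
  rw [Subspace.dualCoannihilator_dualAnnihilator_eq] at hmem
  obtain ⟨m, hm, hml⟩ := hmem
  rwa [← toDual.injective hml]

theorem isLittleO_of_eq_zero_on_paratingentSpan [FiniteDimensional ℝ E] [FiniteDimensional ℝ F]
    {R : E →L[ℝ] F} (hR : ∀ v ∈ paratingentSpan N p, R v = 0) :
    (fun z : E × E => R (z.1 - z.2)) =o[𝓝[N ×ˢ N] (p, p)] fun z => z.1 - z.2 :=
  isLittleO_of_forall_dual fun l =>
    mem_paratingentAnnihilator.1 <|
      (mem_paratingentAnnihilator_iff_forall_mem_paratingentSpan (l := l.comp R)).2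
        fun v hv => (congrArg l (hR v hv)).trans l.map_zero

/-! ### Behaviour under strictly differentiable maps -/

variable {M : Set F} {H : E → F} {A : E →L[ℝ] F}

theorem comp_mem_paratingentAnnihilator {l : F →L[ℝ] ℝ} (hH : HasStrictFDerivAt H A p)
    (hNM : Tendsto H (𝓝[N] p) (𝓝[M] (H p))) (hl : l ∈ paratingentAnnihilator M (H p)) :
    l.comp A ∈ paratingentAnnihilator N p := by
  have hpairs : Tendsto (Prod.map H H) (𝓝[N ×ˢ N] (p, p)) (𝓝[M ×ˢ M] (H p, H p)) := by
    simpa only [nhdsWithin_prod_eq] using hNM.prodMap hNM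
  have himage : (fun z : E × E => l (H z.1 - H z.2)) =o[𝓝[N ×ˢ N] (p, p)] fun z => z.1 - z.2 :=
    (hl.comp_tendsto hpairs).trans_isBigO (hH.isBigO_sub.mono nhdsWithin_le_nhds)
  have herror : (fun z : E × E => l (H z.1 - H z.2 - A (z.1 - z.2)))
      =o[𝓝[N ×ˢ N] (p, p)] fun z => z.1 - z.2 :=
    (l.isBigO_comp _ _).trans_isLittleO (hH.isLittleO.mono nhdsWithin_le_nhds)
  refine mem_paratingentAnnihilator.2 ((himage.sub herror).congr_left fun z => ?_)
  simp

theorem map_mem_paratingentSpan (hH : HasStrictFDerivAt H A p)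
    (hNM : Tendsto H (𝓝[N] p) (𝓝[M] (H p))) {v : E} (hv : v ∈ paratingentSpan N p) :
    A v ∈ paratingentSpan M (H p) :=
  mem_paratingentSpan.2 fun _ hl =>
    mem_paratingentSpan.1 hv _ (comp_mem_paratingentAnnihilator hH hNM hl)

theorem IsFrechetNormal.comp_hasFDerivAt {l : F →L[ℝ] ℝ} (hl : IsFrechetNormal M (H p) l)
    (hH : HasFDerivAt H A p) (hNM : Tendsto H (𝓝[N] p) (𝓝[M] (H p))) :
    IsFrechetNormal N p (l.comp A) := by
  have himage : (fun x => max (l (H x - H p)) 0) =o[𝓝[N] p] fun x => x - p :=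
    (hl.comp_tendsto hNM).trans_isBigO (hH.isBigO_sub.mono nhdsWithin_le_nhds)
  have herror : (fun x => l (H x - H p - A (x - p))) =o[𝓝[N] p] fun x => x - p :=
    (l.isBigO_comp _ _).trans_isLittleO (hH.isLittleO.mono nhdsWithin_le_nhds)
  refine (IsBigO.of_bound' (.of_forall fun x => ?_)).trans_isLittleO (himage.add herror.norm_left)
  have hsplit : l.comp A (x - p) = l (H x - H p) - l (H x - H p - A (x - p)) := by simp
  have hnorm := neg_le_abs (l (H x - H p - A (x - p)))
  rw [hsplit, Real.norm_of_nonneg (le_max_right _ _), Real.norm_eq_abs, Real.norm_eq_abs]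
  refine le_trans (max_le ?_ ?_) (le_abs_self _)
  · linarith [le_max_left (l (H x - H p)) 0]
  · positivity

/-! ### Generic points of locally compact sets -/

theorem exists_forall_mem_interior_of_isClosed {X ι : Type*} [TopologicalSpace X] [BaireSpace X]
    [Nonempty X] [Countable ι] {C : ι → Set X} (hC : ∀ i, IsClosed (C i)) :
    ∃ x, ∀ i, x ∈ C i → x ∈ interior (C i) := by
  have hdense : Dense (⋂ i, (frontier (C i))ᶜ) := dense_iInter_of_isOpen
    (fun i => isClosed_frontier.isOpen_compl)
    (fun i => interior_eq_empty_iff_dense_compl.1 (interior_frontier (hC i)))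
  obtain ⟨x, hx⟩ := hdense.nonempty
  refine ⟨x, fun i hxi => by_contra fun hint => ?_⟩
  exact mem_iInter.1 hx i ⟨subset_closure hxi, hint⟩

theorem LocallyCompactSubset.locallyCompactSpace {V : Type*} [NormedAddCommGroup V] {N : Set V}
    (hN : LocallyCompactSubset N) : LocallyCompactSpace N := by
  refine @WeaklyLocallyCompactSpace.locallyCompactSpace _ _ _ ⟨fun x => ?_⟩
  obtain ⟨K, hKN, hK, U, hU, hxU, hUK⟩ := hN x x.2
  refine ⟨Subtype.val ⁻¹' K, ?_, ?_⟩
  · rwa [Topology.IsInducing.subtypeVal.isCompact_iff, Subtype.image_preimage_coe,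
      inter_eq_right.2 hKN]
  · filter_upwards [(hU.preimage continuous_subtype_val).mem_nhds hxU] with y hy using
      hUK ⟨y.2, hy⟩

theorem LocallyCompactSubset.exists_forall_mem_nhdsWithin {V ι : Type*} [NormedAddCommGroup V]
    [Countable ι] {N : Set V} (hN : LocallyCompactSubset N) (hne : N.Nonempty) {C : ι → Set V}
    (hC : ∀ i, IsClosed (C i)) :
    ∃ p ∈ N, ∀ i, p ∈ C i → C i ∈ 𝓝[N] p := by
  have := hN.locallyCompactSpace
  have := hne.to_subtype
  obtain ⟨p, hp⟩ := exists_forall_mem_interior_of_isClosed (X := N)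
    fun i => (hC i).preimage continuous_subtype_val
  exact ⟨p, p.2, fun i hpi => (eventually_nhds_subtype_iff N p (· ∈ C i)).1
    (mem_interior_iff_mem_nhds.1 (hp i hpi))⟩

/-- `|l|` is at most `ε` on the unit directions of all sufficiently short chords of `N` near
`p`. -/
def HasChordBound (N : Set E) (l : E →L[ℝ] ℝ) (ε : ℝ) (p : E) : Prop :=
  IsBigOWith ε (𝓝[N ×ˢ N] (p, p)) (fun z : E × E => l (z.1 - z.2)) fun z => z.1 - z.2

theorem mem_paratingentAnnihilator_iff_forall_hasChordBound :
    l ∈ paratingentAnnihilator N p ↔ ∀ ε > 0, HasChordBound N l ε p :=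
  mem_paratingentAnnihilator.trans isLittleO_iff_forall_isBigOWith

theorem HasChordBound.of_norm_sub_le {l' : E →L[ℝ] ℝ} {ε δ : ℝ} (hl : HasChordBound N l ε p)
    (hδ : ‖l' - l‖ ≤ δ) : HasChordBound N l' (ε + δ) p := by
  have hdiff := ((l' - l).isBigOWith_comp (fun z : E × E => z.1 - z.2) (𝓝[N ×ˢ N] (p, p))).weaken hδ
  exact (hl.add hdiff).congr_left fun z => by simp

theorem isOpen_setOf_hasChordBound (N : Set E) (l : E →L[ℝ] ℝ) (ε : ℝ) :
    IsOpen {p | HasChordBound N l ε p} := by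
  simp only [HasChordBound, isBigOWith_iff, eventually_nhdsWithin_iff]
  exact isOpen_setOfPred_eventually_nhds.preimage (continuous_id.prodMk continuous_id)

/-- The points from which the directions to all points of `N` at distance less than `δ` have
`l`-height at most `ε`. -/
def oneSidedChordBoundSet (N : Set E) (l : E →L[ℝ] ℝ) (ε δ : ℝ) : Set E :=
  {q | ∀ x ∈ N, δ ≤ dist x q ∨ l (x - q) ≤ ε * ‖x - q‖}

theorem isClosed_oneSidedChordBoundSet (N : Set E) (l : E →L[ℝ] ℝ) (ε δ : ℝ) :
    IsClosed (oneSidedChordBoundSet N l ε δ) := by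
  simp only [oneSidedChordBoundSet, ofPred_forall, ofPred_or]
  exact isClosed_biInter fun x _ =>
    (isClosed_le (by fun_prop) (by fun_prop)).union (isClosed_le (by fun_prop) (by fun_prop))

theorem hasChordBound_of_oneSidedChordBoundSet_mem_nhdsWithin {ε δ : ℝ} (hδ : 0 < δ)
    (hp : oneSidedChordBoundSet N l ε δ ∈ 𝓝[N] p) : HasChordBound N l ε p := by
  have hnear : ∀ᶠ z : E × E in 𝓝[N ×ˢ N] (p, p), dist z.1 z.2 < δ :=
    (continuous_dist.tendsto' (p, p) 0 (dist_self p)).eventually_lt_const hδ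
      |>.filter_mono nhdsWithin_le_nhds
  have hmem : oneSidedChordBoundSet N l ε δ ×ˢ oneSidedChordBoundSet N l ε δ
      ∈ 𝓝[N ×ˢ N] (p, p) := by
    rw [nhdsWithin_prod_eq]
    exact prod_mem_prod hp hp
  refine isBigOWith_iff.2 ?_
  filter_upwards [hnear, self_mem_nhdsWithin, hmem] with z hz hzN hzS
  have hright := (hzS.2 z.1 hzN.1).resolve_left hz.not_ge
  have hleft := (hzS.1 z.2 hzN.2).resolve_left (by rwa [dist_comm, not_le])
  rw [← neg_sub z.1 z.2, map_neg, norm_neg] at hleft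
  exact abs_le.2 ⟨by linarith, hright⟩

/-- A point of `N` is regular if all its Fréchet normals annihilate the paratingent cone, and the
paratingent annihilators of `N` are upper semicontinuous there. -/
structure IsRegularPoint (N : Set E) (p : E) : Prop where
  mem_paratingentAnnihilator_of_isFrechetNormal :
    ∀ l, IsFrechetNormal N p l → l ∈ paratingentAnnihilator N p
  mem_paratingentAnnihilator_of_mem_closure :
    ∀ l, (p, l) ∈ closure {z : E × (E →L[ℝ] ℝ) | z.1 ∈ N ∧ z.2 ∈ paratingentAnnihilator N z.1} →
      l ∈ paratingentAnnihilator N p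

theorem IsFrechetNormal.mem_paratingentAnnihilator_of_generic {D : Set (E →L[ℝ] ℝ)} {e : ℕ → ℝ}
    (hD : Dense D) (he : Tendsto e atTop (𝓝[>] 0))
    (hp : ∀ l ∈ D, ∀ i j, p ∈ oneSidedChordBoundSet N l (e i) (e j) →
      oneSidedChordBoundSet N l (e i) (e j) ∈ 𝓝[N] p)
    (hl : IsFrechetNormal N p l) : l ∈ paratingentAnnihilator N p := by
  refine mem_paratingentAnnihilator_iff_forall_hasChordBound.2 fun ε hε => ?_
  obtain ⟨he0, hepos⟩ := tendsto_nhdsWithin_iff.1 he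
  obtain ⟨i, hei, hi⟩ := ((he0.eventually_lt_const (half_pos hε)).and hepos).exists
  obtain ⟨m, hmD, hm⟩ := hD.exists_dist_lt l (half_pos hi)
  rw [dist_comm, dist_eq_norm] at hm
  obtain ⟨δ, hδ, hball⟩ := Metric.mem_nhdsWithin_iff.1
    (isFrechetNormal_iff.1 hl (e i / 2) (half_pos hi))
  obtain ⟨j, hej, hj⟩ := ((he0.eventually_lt_const hδ).and hepos).exists
  have hpm : p ∈ oneSidedChordBoundSet N m (e i) (e j) := by
    refine fun x hx => or_iff_not_imp_left.2 fun h => ?_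
    have hlx : l (x - p) ≤ e i / 2 * ‖x - p‖ := hball ⟨(not_le.1 h).trans hej, hx⟩
    have hmx : m (x - p) - l (x - p) ≤ e i / 2 * ‖x - p‖ :=
      (le_abs_self _).trans ((m - l).le_of_opNorm_le hm.le (x - p))
    linarith
  have hbound := hasChordBound_of_oneSidedChordBoundSet_mem_nhdsWithin hj (hp m hmD i j hpm)
  rw [norm_sub_rev] at hm
  exact (hbound.of_norm_sub_le hm.le).weaken (by linarith [hi.out])

theorem mem_paratingentAnnihilator_of_mem_closure_of_generic {D : Set (E →L[ℝ] ℝ)} {e : ℕ → ℝ}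
    (hD : Dense D) (he : Tendsto e atTop (𝓝[>] 0))
    (hp : ∀ l ∈ D, ∀ i, ¬ HasChordBound N l (e i) p → ∀ᶠ q in 𝓝[N] p, ¬ HasChordBound N l (e i) q)
    (hl : (p, l) ∈ closure
      {z : E × (E →L[ℝ] ℝ) | z.1 ∈ N ∧ z.2 ∈ paratingentAnnihilator N z.1}) :
    l ∈ paratingentAnnihilator N p := by
  refine mem_paratingentAnnihilator_iff_forall_hasChordBound.2 fun ε hε => ?_
  obtain ⟨he0, hepos⟩ := tendsto_nhdsWithin_iff.1 he
  obtain ⟨i, hei, hi⟩ := ((he0.eventually_lt_const (half_pos hε)).and hepos).exists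
  obtain ⟨m, hmD, hm⟩ := hD.exists_dist_lt l hi
  have hmp : HasChordBound N m (e i) p := by
    by_contra hnot
    have hq : ∀ᶠ q in 𝓝 p, q ∈ N → ¬ HasChordBound N m (e i) q :=
      eventually_nhdsWithin_iff.1 (hp m hmD i hnot)
    have hball : ∀ᶠ l' in 𝓝 l, dist l' m < e i :=
      (continuous_id.dist continuous_const).tendsto l |>.eventually_lt_const hm
    obtain ⟨⟨q, l'⟩, ⟨hqN, hl'⟩, hql⟩ :=
      ((mem_closure_iff_frequently.1 hl).and_eventually (hq.prod_nhds hball)).exists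
    rw [dist_comm, dist_eq_norm] at hql
    have hslack := mem_paratingentAnnihilator_iff_forall_hasChordBound.1 hl' _ (sub_pos.2 hql.2)
    have hmq := hslack.of_norm_sub_le (le_refl ‖m - l'‖)
    rw [sub_add_cancel] at hmq
    exact hql.1 hqN hmq
  rw [dist_eq_norm] at hm
  exact (hmp.of_norm_sub_le hm.le).weaken (by linarith)

theorem LocallyCompactSubset.exists_isRegularPoint [FiniteDimensional ℝ E]
    (hN : LocallyCompactSubset N) (hne : N.Nonempty) : ∃ p ∈ N, IsRegularPoint N p := by
  obtain ⟨D, hDcount, hD⟩ := TopologicalSpace.exists_countable_dense (E →L[ℝ] ℝ)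
  have := hDcount.to_subtype
  let e : ℕ → ℝ := fun i => 1 / (i + 1)
  have he : Tendsto e atTop (𝓝[>] 0) := tendsto_nhdsWithin_iff.2
    ⟨tendsto_one_div_add_atTop_nhds_zero_nat, .of_forall fun _ => Nat.one_div_pos_of_nat (α := ℝ)⟩
  let C : (D × ℕ × ℕ) ⊕ (D × ℕ) → Set E :=
    Sum.elim (fun t => oneSidedChordBoundSet N t.1 (e t.2.1) (e t.2.2))
      fun t => {q | HasChordBound N t.1 (e t.2) q}ᶜ
  have hC : ∀ t, IsClosed (C t) := by
    rintro (t | t)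
    · exact isClosed_oneSidedChordBoundSet _ _ _ _
    · exact (isOpen_setOf_hasChordBound _ _ _).isClosed_compl
  obtain ⟨p, hpN, hp⟩ := hN.exists_forall_mem_nhdsWithin hne hC
  exact ⟨p, hpN, fun l hl => hl.mem_paratingentAnnihilator_of_generic hD he
      fun m hm i j => hp (.inl (⟨m, hm⟩, i, j)),
    fun l hl => mem_paratingentAnnihilator_of_mem_closure_of_generic hD he
      (fun m hm i => hp (.inr (⟨m, hm⟩, i))) hl⟩

end Paratingent

variable {N : Set E} {p q : E}

/-! ### Consequences of homogeneity -/

theorem CkHomogeneous.finrank_paratingentSpan_le [FiniteDimensional ℝ E] {k : ℕ}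
    (hN : CkHomogeneous k N) (hk : k ≠ 0) (hp : p ∈ N) (hq : q ∈ N) :
    Module.finrank ℝ (paratingentSpan N p) ≤ Module.finrank ℝ (paratingentSpan N q) := by
  obtain ⟨U, V, H, H', hH, hpU, rfl, hiff⟩ := ckHomogeneous_iff.1 hN p hp q hq
  have hmaps : ∀ v ∈ paratingentSpan N p, fderiv ℝ H p v ∈ paratingentSpan N (H p) := fun v =>
    map_mem_paratingentSpan (hH.hasStrictFDerivAt hk hpU) (hH.tendsto_nhdsWithin hiff hpU)
  refine LinearMap.finrank_le_finrank_of_injective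
    (f := (fderiv ℝ H p : E →ₗ[ℝ] E).restrict hmaps) fun v w hvw => ?_
  exact Subtype.ext (hH.fderiv_injective hk hpU (congrArg Subtype.val hvw))

theorem CkHomogeneous.finrank_paratingentSpan_eq [FiniteDimensional ℝ E] {k : ℕ}
    (hN : CkHomogeneous k N) (hk : k ≠ 0) (hp : p ∈ N) (hq : q ∈ N) :
    Module.finrank ℝ (paratingentSpan N p) = Module.finrank ℝ (paratingentSpan N q) :=
  (hN.finrank_paratingentSpan_le hk hp hq).antisymm (hN.finrank_paratingentSpan_le hk hq hp)

theorem CkHomogeneous.mem_paratingentAnnihilator_of_isFrechetNormal {k : ℕ}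
    (hN : CkHomogeneous k N) (hk : k ≠ 0) (hp : p ∈ N)
    (hnormal : ∀ l, IsFrechetNormal N p l → l ∈ paratingentAnnihilator N p) (hq : q ∈ N)
    {l : E →L[ℝ] ℝ} (hl : IsFrechetNormal N q l) : l ∈ paratingentAnnihilator N q := by
  obtain ⟨U, V, H, H', hH, hpU, rfl, hiff⟩ := ckHomogeneous_iff.1 hN p hp q hq
  have hleft : H' (H p) = p := hH.left_inv hpU
  have hiff' : ∀ y ∈ V, y ∈ N ↔ H' y ∈ N := fun y hy => by
    rw [hiff (H' y) (hH.symm.mapsTo hy), hH.symm.left_inv hy]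
  have hpull := hnormal _ (hl.comp_hasFDerivAt (hH.hasStrictFDerivAt hk hpU).hasFDerivAt
    (hH.tendsto_nhdsWithin hiff hpU))
  rw [← hleft] at hpull
  have hpush := comp_mem_paratingentAnnihilator (hH.symm.hasStrictFDerivAt hk (hH.mapsTo hpU))
    (hH.symm.tendsto_nhdsWithin hiff' (hH.mapsTo hpU)) hpull
  rwa [hleft, ContinuousLinearMap.comp_assoc, hH.fderiv_comp_fderiv_symm hk hpU,
    ContinuousLinearMap.comp_id] at hpush

/-! ### Local sections of linear projections -/

/-- `g`, defined on the open set `W`, is a continuous section of the linear projection `π` that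
parametrises the part of `N` in the open set `O`; thus `N ∩ O` is a graph over `W`. -/
structure IsLocalSection (N : Set E) (π : E →L[ℝ] F) (g : F → E) (W : Set F) (O : Set E) :
    Prop where
  isOpen_source : IsOpen W
  isOpen_target : IsOpen O
  continuousOn : ContinuousOn g W
  right_inv : ∀ a ∈ W, π (g a) = a
  image_eq : g '' W = N ∩ O

namespace IsLocalSection

variable {π : E →L[ℝ] F} {g : F → E} {W : Set F} {O : Set E}

theorem apply_mem (h : IsLocalSection N π g W O) {a : F} (ha : a ∈ W) : g a ∈ N ∩ O :=
  h.image_eq ▸ mem_image_of_mem g ha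

theorem proj_mem (h : IsLocalSection N π g W O) {x : E} (hx : x ∈ N ∩ O) : π x ∈ W := by
  obtain ⟨a, ha, rfl⟩ := h.image_eq.superset hx
  rwa [h.right_inv a ha]

theorem apply_proj (h : IsLocalSection N π g W O) {x : E} (hx : x ∈ N ∩ O) : g (π x) = x := by
  obtain ⟨a, ha, rfl⟩ := h.image_eq.superset hx
  rw [h.right_inv a ha]

theorem injOn (h : IsLocalSection N π g W O) : InjOn g W :=
  LeftInvOn.injOn (f₁' := π) h.right_inv

theorem eventually_right_inv (h : IsLocalSection N π g W O) {a : F} (ha : a ∈ W) :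
    ∀ᶠ b in 𝓝 a, π (g b) = b :=
  eventually_of_mem (h.isOpen_source.mem_nhds ha) h.right_inv

theorem tendsto_nhdsWithin (h : IsLocalSection N π g W O) {a : F} (ha : a ∈ W) :
    Tendsto g (𝓝 a) (𝓝[N] (g a)) := by
  have hW := h.isOpen_source.mem_nhds ha
  refine tendsto_nhdsWithin_iff.2 ⟨h.continuousOn.continuousAt hW, ?_⟩
  filter_upwards [hW] with b hb using (h.apply_mem hb).1

theorem mono (h : IsLocalSection N π g W O) {W' : Set F} (hW' : IsOpen W') (hsub : W' ⊆ W) :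
    IsLocalSection N π g W' (O ∩ π ⁻¹' W') where
  isOpen_source := hW'
  isOpen_target := h.isOpen_target.inter (hW'.preimage π.continuous)
  continuousOn := h.continuousOn.mono hsub
  right_inv a ha := h.right_inv a (hsub ha)
  image_eq := by
    refine Subset.antisymm ?_ fun x hx => ⟨π x, hx.2.2, h.apply_proj ⟨hx.1, hx.2.1⟩⟩
    rintro _ ⟨a, ha, rfl⟩
    have hga := h.apply_mem (hsub ha)
    exact ⟨hga.1, hga.2, by rwa [mem_preimage, h.right_inv a (hsub ha)]⟩

end IsLocalSection

/-- On a nonempty open piece, `N` is the graph of a `C^k` function, encoded by a `C^k` local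
section of a linear projection to some `ℝ^m`. -/
def IsCkGraphSomewhere (k : ℕ) (N : Set E) : Prop :=
  ∃ (m : ℕ) (π : E →L[ℝ] Euc m) (g : Euc m → E) (W : Set (Euc m)) (O : Set E),
    IsLocalSection N π g W O ∧ W.Nonempty ∧ ContDiffOn ℝ k g W

/-! ### Projections injective on the paratingent space -/

theorem exists_clm_leftInverse_on_submodule [FiniteDimensional ℝ F] {T : Submodule ℝ E}
    {π : E →L[ℝ] F} (hinj : ∀ v ∈ T, π v = 0 → v = 0) :
    ∃ s : F →L[ℝ] E, ∀ v ∈ T, s (π v) = v := by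
  have hker : ((π : E →ₗ[ℝ] F) ∘ₗ T.subtype).ker = ⊥ :=
    LinearMap.ker_eq_bot'.2 fun v hv => Subtype.ext (hinj v v.2 hv)
  obtain ⟨s, hs⟩ := LinearMap.exists_leftInverse_of_injective _ hker
  exact ⟨LinearMap.toContinuousLinearMap (T.subtype ∘ₗ s), fun v hv =>
    congrArg Subtype.val (LinearMap.congr_fun hs ⟨v, hv⟩)⟩

theorem exists_clm_bijective_on_submodule [FiniteDimensional ℝ E] (T : Submodule ℝ E) :
    ∃ P : E →L[ℝ] Euc (Module.finrank ℝ T),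
      (∀ v ∈ T, P v = 0 → v = 0) ∧ ∀ a, ∃ v ∈ T, P v = a := by
  let e : T ≃L[ℝ] Euc (Module.finrank ℝ T) := .ofFinrankEq finrank_euclideanSpace_fin.symm
  obtain ⟨P, hP⟩ := (e.toLinearEquiv : T →ₗ[ℝ] Euc (Module.finrank ℝ T)).exists_extend
  have hPe : ∀ v : T, P v = e v := LinearMap.congr_fun hP
  refine ⟨LinearMap.toContinuousLinearMap P, fun v hv hPv => ?_, fun a => ?_⟩
  · exact congrArg Subtype.val (e.map_eq_zero_iff.1 ((hPe ⟨v, hv⟩).symm.trans hPv))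
  · exact ⟨e.symm a, (e.symm a).2, (hPe _).trans (e.apply_symm_apply a)⟩

section InjectiveProjection

variable [FiniteDimensional ℝ E] [FiniteDimensional ℝ F] {π : E →L[ℝ] F}

theorem exists_clm_sub_isLittleO_sub (hinj : ∀ v ∈ paratingentSpan N p, π v = 0 → v = 0) :
    ∃ s : F →L[ℝ] E, (fun z : E × E => z.1 - z.2 - s (π (z.1 - z.2)))
      =o[𝓝[N ×ˢ N] (p, p)] fun z => z.1 - z.2 := by
  obtain ⟨s, hs⟩ := exists_clm_leftInverse_on_submodule hinj
  exact ⟨s, isLittleO_of_eq_zero_on_paratingentSpan (R := .id ℝ E - s.comp π)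
    fun v hv => sub_eq_zero.2 (hs v hv).symm⟩

theorem isBigO_sub_map_sub (hinj : ∀ v ∈ paratingentSpan N p, π v = 0 → v = 0) :
    (fun z : E × E => z.1 - z.2) =O[𝓝[N ×ˢ N] (p, p)] fun z => π (z.1 - z.2) := by
  obtain ⟨s, hs⟩ := exists_clm_sub_isLittleO_sub hinj
  have hsπ := hs.right_isBigO_sub
  simp only [sub_sub_cancel] at hsπ
  exact hsπ.trans (s.isBigO_comp _ _)

variable {g : F → E} {a : F}

theorem exists_hasStrictFDerivAt_of_section (hg : Tendsto g (𝓝 a) (𝓝[N] (g a)))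
    (hπ : ∀ᶠ b in 𝓝 a, π (g b) = b) (hinj : ∀ v ∈ paratingentSpan N (g a), π v = 0 → v = 0) :
    ∃ D : F →L[ℝ] E, HasStrictFDerivAt g D a := by
  obtain ⟨s, hs⟩ := exists_clm_sub_isLittleO_sub hinj
  have hpair : Tendsto (Prod.map g g) (𝓝 (a, a)) (𝓝[N ×ˢ N] (g a, g a)) := by
    simpa only [nhdsWithin_prod_eq, nhds_prod_eq] using hg.prodMap hg
  have hπpair : ∀ᶠ z : F × F in 𝓝 (a, a), π (g z.1 - g z.2) = z.1 - z.2 := by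
    filter_upwards [hπ.prod_nhds hπ] with z hz using by rw [map_sub, hz.1, hz.2]
  have hlip : (fun z : F × F => g z.1 - g z.2) =O[𝓝 (a, a)] fun z => z.1 - z.2 :=
    ((isBigO_sub_map_sub hinj).comp_tendsto hpair).congr' .rfl hπpair
  refine ⟨s, .of_isLittleO (((hs.comp_tendsto hpair).trans_isBigO hlip).congr' ?_ .rfl)⟩
  filter_upwards [hπpair] with z hz
  simp only [Function.comp_apply, Prod.map_fst, Prod.map_snd, hz]

theorem map_paratingentSpan_eq_top_of_section (hg : Tendsto g (𝓝 a) (𝓝[N] (g a)))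
    (hπ : ∀ᶠ b in 𝓝 a, π (g b) = b)
    (hlip : (fun z : F × F => g z.1 - g z.2) =O[𝓝 (a, a)] fun z => z.1 - z.2) :
    (paratingentSpan N (g a)).map (π : E →ₗ[ℝ] F) = ⊤ := by
  by_contra hne
  obtain ⟨lam, hlam, hker⟩ := Submodule.exists_le_ker_of_lt_top _ (lt_top_iff_ne_top.2 hne)
  let l : F →L[ℝ] ℝ := LinearMap.toContinuousLinearMap lam
  have hmem : l.comp π ∈ paratingentAnnihilator N (g a) :=
    mem_paratingentAnnihilator_iff_forall_mem_paratingentSpan.2 fun v hv =>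
      hker (Submodule.mem_map_of_mem hv)
  have hpair : Tendsto (Prod.map g g) (𝓝 (a, a)) (𝓝[N ×ˢ N] (g a, g a)) := by
    simpa only [nhdsWithin_prod_eq, nhds_prod_eq] using hg.prodMap hg
  have hsmall : (fun z : F × F => l (z.1 - z.2)) =o[𝓝 (a, a)] fun z => z.1 - z.2 := by
    refine ((hmem.comp_tendsto hpair).trans_isBigO hlip).congr' ?_ .rfl
    filter_upwards [hπ.prod_nhds hπ] with z hz
    simp [hz.1, hz.2]
  have hzero : HasStrictFDerivAt l (0 : F →L[ℝ] ℝ) a :=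
    .of_isLittleO (by simpa only [map_sub, zero_apply, sub_zero] using hsmall)
  have hl : l = 0 := l.hasFDerivAt.unique hzero.hasFDerivAt
  exact hlam (LinearMap.ext fun v => DFunLike.congr_fun hl v)

theorem injective_on_paratingentSpan_of_section (hg : Tendsto g (𝓝 a) (𝓝[N] (g a)))
    (hπ : ∀ᶠ b in 𝓝 a, π (g b) = b)
    (hlip : (fun z : F × F => g z.1 - g z.2) =O[𝓝 (a, a)] fun z => z.1 - z.2)
    (hdim : Module.finrank ℝ (paratingentSpan N (g a)) = Module.finrank ℝ F) :
    ∀ v ∈ paratingentSpan N (g a), π v = 0 → v = 0 := by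
  have hsurj : Function.Surjective ((π : E →ₗ[ℝ] F) ∘ₗ (paratingentSpan N (g a)).subtype) := by
    rw [← LinearMap.range_eq_top, LinearMap.range_comp, Submodule.range_subtype]
    exact map_paratingentSpan_eq_top_of_section hg hπ hlip
  have hinj := (LinearMap.injective_iff_surjective_of_finrank_eq_finrank hdim).2 hsurj
  exact fun v hv hπv => congrArg Subtype.val
    (hinj (a₁ := ⟨v, hv⟩) (a₂ := 0) (hπv.trans (map_zero _).symm))

end InjectiveProjection

/-! ### The `C^1` case -/

theorem LocallyCompactSubset.exists_isCompact_mem_nhdsWithin {V : Type*} [NormedAddCommGroup V]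
    {N : Set V} {p : V} (hN : LocallyCompactSubset N) (hp : p ∈ N) {S : Set V} (hS : S ∈ 𝓝[N] p) :
    ∃ M ⊆ N ∩ S, IsCompact M ∧ M ∈ 𝓝[N] p := by
  obtain ⟨K, hKN, hK, U, hU, hpU, hUK⟩ := hN p hp
  obtain ⟨r, hr, hrS⟩ := Metric.mem_nhdsWithin_iff.1 hS
  have hball : closedBall p (r / 2) ⊆ ball p r := closedBall_subset_ball (half_lt_self hr)
  refine ⟨K ∩ closedBall p (r / 2), fun x hx => ⟨hKN hx.1, hrS ⟨hball hx.2, hKN hx.1⟩⟩,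
    hK.inter_right isClosed_closedBall, ?_⟩
  filter_upwards [self_mem_nhdsWithin, mem_nhdsWithin_of_mem_nhds (hU.mem_nhds hpU),
    mem_nhdsWithin_of_mem_nhds (closedBall_mem_nhds p (half_pos hr))] with x hxN hxU hxr
    using ⟨hUK ⟨hxN, hxU⟩, hxr⟩

theorem contDiffOn_one_of_forall_hasStrictFDerivAt {f : E → F} {W : Set E} (hW : IsOpen W)
    (hf : ∀ x ∈ W, ∃ D : E →L[ℝ] F, HasStrictFDerivAt f D x) : ContDiffOn ℝ 1 f W := by
  have hf' : ∀ x ∈ W, HasStrictFDerivAt f (fderiv ℝ f x) x := fun x hx => by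
    obtain ⟨D, hD⟩ := hf x hx
    rwa [hD.hasFDerivAt.fderiv]
  rw [← zero_add (1 : WithTop ℕ∞), contDiffOn_succ_iff_fderiv_of_isOpen hW, contDiffOn_zero]
  refine ⟨fun x hx => (hf' x hx).differentiableAt.differentiableWithinAt, by simp,
    fun a ha => ContinuousAt.continuousWithinAt (Metric.tendsto_nhds.2 fun ε hε => ?_)⟩
  have hnear : ∀ᶠ x in 𝓝 a, ∀ᶠ z : E × E in 𝓝 (x, x),
      ‖f z.1 - f z.2 - fderiv ℝ f a (z.1 - z.2)‖ ≤ ε / 2 * ‖z.1 - z.2‖ :=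
    (continuous_id.prodMk continuous_id).continuousAt.eventually
      (eventually_eventually_nhds.2 (isLittleO_iff.1 (hf' a ha).isLittleO (half_pos hε)))
  filter_upwards [hnear, hW.mem_nhds ha] with x hx hxW
  have hdiff : HasFDerivAt (fun y => f y - fderiv ℝ f a y) (fderiv ℝ f x - fderiv ℝ f a) x :=
    (hf' x hxW).hasFDerivAt.sub (fderiv ℝ f a).hasFDerivAt
  have hlip : ∀ᶠ y in 𝓝 x, ‖f y - f x - fderiv ℝ f a (y - x)‖ ≤ ε / 2 * ‖y - x‖ :=
    (continuous_id.prodMk (continuous_const (y := x))).continuousAt.eventually hx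
  rw [dist_eq_norm]
  refine (hdiff.le_of_lip' (half_pos hε).le ?_).trans_lt (half_lt_self hε)
  filter_upwards [hlip] with y hy
  rwa [sub_sub_sub_comm, ← map_sub]

theorem isFrechetNormal_innerSL_comp_of_forall_dist_le {F : Type*} [NormedAddCommGroup F]
    [InnerProductSpace ℝ F] {P : E →L[ℝ] F} {z : F} {M : Set E} (hM : M ∈ 𝓝[N] q)
    (hmin : ∀ x ∈ M, dist z (P q) ≤ dist z (P x)) :
    IsFrechetNormal N q ((innerSL ℝ (z - P q)).comp P) := by
  have hsq : (fun x => ‖P (x - q)‖ ^ 2) =o[𝓝[N] q] fun x => x - q :=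
    ((P.isBigO_comp (fun x => x - q) (𝓝[N] q)).norm_norm.pow 2).trans_isLittleO
      ((isLittleO_pow_sub_sub q one_lt_two).mono nhdsWithin_le_nhds)
  refine (IsBigO.of_bound' ?_).trans_isLittleO hsq
  filter_upwards [hM] with x hx
  have hle : ‖z - P q‖ ^ 2 ≤ ‖z - P q - P (x - q)‖ ^ 2 := by
    have h := hmin x hx
    rw [dist_eq_norm, dist_eq_norm] at h
    rw [map_sub, sub_sub, add_sub_cancel]
    gcongr
  have hexpand := norm_sub_sq_real (z - P q) (P (x - q))
  rw [Real.norm_of_nonneg (le_max_right _ _), Real.norm_of_nonneg (by positivity)]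
  refine max_le ?_ (by positivity)
  rw [ContinuousLinearMap.comp_apply, innerSL_apply_apply]
  linarith [sq_nonneg ‖P (x - q)‖]

section Projection

variable {F : Type*} [NormedAddCommGroup F] [InnerProductSpace ℝ F] {P : E →L[ℝ] F} {M : Set E}
  {K : ℝ}

theorem exists_nearest_tendsto_nhds (hM : IsCompact M) (hpM : p ∈ M)
    (hanti : ∀ x ∈ M, ∀ y ∈ M, ‖x - y‖ ≤ K * ‖P x - P y‖) :
    ∃ nearest : F → E, (∀ z, nearest z ∈ M) ∧
      (∀ z, ∀ x ∈ M, dist z (P (nearest z)) ≤ dist z (P x)) ∧ Tendsto nearest (𝓝 (P p)) (𝓝 p) := by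
  have hmin : ∀ z : F, ∃ q ∈ M, ∀ x ∈ M, dist z (P q) ≤ dist z (P x) := fun z =>
    hM.exists_isMinOn ⟨p, hpM⟩ (f := fun x => dist z (P x)) (by fun_prop)
  choose nearest hmem hnearest using hmin
  refine ⟨nearest, hmem, hnearest, tendsto_iff_norm_sub_tendsto_zero.2 ?_⟩
  have hdist : Tendsto (fun z => 2 * dist z (P p)) (𝓝 (P p)) (𝓝 0) :=
    Continuous.tendsto' (by fun_prop) _ _ (by simp)
  have hP : Tendsto (fun z => ‖P (nearest z) - P p‖) (𝓝 (P p)) (𝓝 0) := by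
    refine squeeze_zero (fun _ => norm_nonneg _) (fun z => ?_) hdist
    rw [← dist_eq_norm]
    linarith [dist_triangle_left (P (nearest z)) (P p) z, hnearest z p hpM]
  exact squeeze_zero (fun _ => norm_nonneg _) (fun z => hanti _ (hmem z) p hpM)
    (by simpa only [mul_zero] using hP.const_mul K)

-- A ball centred outside `P '' M` and touching it provides a normal at the point of contact.
theorem frequently_exists_unit_comp_mem_paratingentAnnihilator
    (hnormal : ∀ q ∈ N, ∀ l, IsFrechetNormal N q l → l ∈ paratingentAnnihilator N q)
    (hM : IsCompact M) (hMN : M ⊆ N) (hpM : p ∈ M) (hMp : M ∈ 𝓝[N] p)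
    (hanti : ∀ x ∈ M, ∀ y ∈ M, ‖x - y‖ ≤ K * ‖P x - P y‖) (hnot : P '' M ∉ 𝓝 (P p)) :
    ∃ᶠ q in 𝓝[N] p, q ∈ N ∧
      ∃ w ∈ sphere (0 : F) 1, (innerSL ℝ w).comp P ∈ paratingentAnnihilator N q := by
  obtain ⟨nearest, hmem, hnearest, hlim⟩ := exists_nearest_tendsto_nhds hM hpM hanti
  have hlimN : Tendsto nearest (𝓝 (P p)) (𝓝[N] p) :=
    tendsto_nhdsWithin_iff.2 ⟨hlim, .of_forall fun z => hMN (hmem z)⟩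
  have houtside : ∃ᶠ z in 𝓝 (P p), z ∉ P '' M := not_eventually.1 hnot
  have hinterior : ∀ᶠ z in 𝓝 (P p), M ∈ 𝓝[N] (nearest z) :=
    hlimN.eventually (eventually_eventually_nhdsWithin.2 hMp)
  refine hlimN.frequently ((houtside.and_eventually hinterior).mono fun z hz => ?_)
  have hne : z - P (nearest z) ≠ 0 := fun h =>
    hz.1 ⟨nearest z, hmem z, (sub_eq_zero.1 h).symm⟩
  refine ⟨hMN (hmem z), ‖z - P (nearest z)‖⁻¹ • (z - P (nearest z)), ?_, ?_⟩
  · rw [mem_sphere_zero_iff_norm, norm_smul, norm_inv, norm_norm,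
      inv_mul_cancel₀ (norm_ne_zero_iff.2 hne)]
  · rw [map_smul, ContinuousLinearMap.smul_comp]
    exact Submodule.smul_mem _ _ (hnormal _ (hMN (hmem z)) _
      (isFrechetNormal_innerSL_comp_of_forall_dist_le hz.2 (hnearest z)))

theorem IsRegularPoint.image_mem_nhds [FiniteDimensional ℝ F] (hp : IsRegularPoint N p)
    (hnormal : ∀ q ∈ N, ∀ l, IsFrechetNormal N q l → l ∈ paratingentAnnihilator N q)
    (hsurj : ∀ a, ∃ v ∈ paratingentSpan N p, P v = a)
    (hM : IsCompact M) (hMN : M ⊆ N) (hpM : p ∈ M) (hMp : M ∈ 𝓝[N] p)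
    (hanti : ∀ x ∈ M, ∀ y ∈ M, ‖x - y‖ ≤ K * ‖P x - P y‖) : P '' M ∈ 𝓝 (P p) := by
  by_contra hnot
  obtain ⟨q, hq, hqN⟩ := exists_seq_forall_of_frequently
    (frequently_exists_unit_comp_mem_paratingentAnnihilator hnormal hM hMN hpM hMp hanti hnot)
  choose hqN w hw hann using hqN
  obtain ⟨w₀, hw₀, φ, hφ, hwφ⟩ := (isCompact_sphere (0 : F) 1).tendsto_subseq hw
  have hcont : Continuous fun w : F => (innerSL ℝ w).comp P := by fun_prop
  have hlim : Tendsto (fun i => (q (φ i), (innerSL ℝ (w (φ i))).comp P)) atTop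
      (𝓝 (p, (innerSL ℝ w₀).comp P)) :=
    ((tendsto_nhds_of_tendsto_nhdsWithin hq).comp hφ.tendsto_atTop).prodMk_nhds
      ((hcont.tendsto w₀).comp hwφ)
  have hann₀ := hp.mem_paratingentAnnihilator_of_mem_closure _
    (mem_closure_of_tendsto hlim (.of_forall fun i => ⟨hqN _, hann _⟩))
  obtain ⟨v, hv, hPv⟩ := hsurj w₀
  have hinner : inner ℝ w₀ (P v) = 0 := mem_paratingentSpan.1 hv _ hann₀
  rw [hPv, inner_self_eq_zero] at hinner
  simp [hinner] at hw₀

end Projection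

theorem exists_isLocalSection_of_image_mem_nhds {P : E →L[ℝ] F} {M : Set E} {K : ℝ} (hMN : M ⊆ N)
    (hpM : p ∈ M) (hMp : M ∈ 𝓝[N] p) (hanti : ∀ x ∈ M, ∀ y ∈ M, ‖x - y‖ ≤ K * ‖P x - P y‖)
    (hPM : P '' M ∈ 𝓝 (P p)) :
    ∃ (g : F → E) (W : Set F) (O : Set E), IsLocalSection N P g W O ∧ P p ∈ W ∧
      ∀ a ∈ W, ∀ b ∈ W, ‖g a - g b‖ ≤ K * ‖a - b‖ := by
  obtain ⟨U, hU, hpU, hUM⟩ := mem_nhdsWithin.1 hMp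
  let g : F → E := Function.invFunOn P M
  have hgM : ∀ a ∈ P '' M, g a ∈ M := fun a ha => Function.invFunOn_mem ha
  have hPg : ∀ a ∈ P '' M, P (g a) = a := fun a ha => Function.invFunOn_eq ha
  have hgP : ∀ x ∈ M, g (P x) = x := fun x hx => by
    have h := hanti _ (hgM _ (mem_image_of_mem P hx)) x hx
    rw [hPg _ (mem_image_of_mem P hx), sub_self, norm_zero, mul_zero] at h
    exact sub_eq_zero.1 (norm_le_zero_iff.1 h)
  have hlip : ∀ a ∈ P '' M, ∀ b ∈ P '' M, ‖g a - g b‖ ≤ K * ‖a - b‖ := fun a ha b hb => by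
    simpa only [hPg a ha, hPg b hb] using hanti _ (hgM a ha) _ (hgM b hb)
  have hcont : ContinuousOn g (P '' M) :=
    (LipschitzOnWith.of_dist_le' fun a ha b hb => by
      simpa only [dist_eq_norm] using hlip a ha b hb).continuousOn
  let W : Set F := interior (P '' M) ∩ g ⁻¹' U
  have hWM : W ⊆ P '' M := inter_subset_left.trans interior_subset
  have hW : IsOpen W := (hcont.mono interior_subset).isOpen_inter_preimage isOpen_interior hU
  refine ⟨g, W, U ∩ P ⁻¹' W, ⟨hW, hU.inter (hW.preimage P.continuous), hcont.mono hWM,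
    fun a ha => hPg a (hWM ha), Subset.antisymm ?_ fun x hx => ?_⟩,
    ⟨mem_interior_iff_mem_nhds.2 hPM, by rwa [mem_preimage, hgP p hpM]⟩,
    fun a ha b hb => hlip a (hWM ha) b (hWM hb)⟩
  · rintro _ ⟨a, ha, rfl⟩
    exact ⟨hMN (hgM a (hWM ha)), ha.2, by rwa [mem_preimage, hPg a (hWM ha)]⟩
  · exact ⟨P x, hx.2.2, hgP x (hUM ⟨hx.2.1, hx.1⟩)⟩

theorem CkHomogeneous.exists_lipschitz_isLocalSection [FiniteDimensional ℝ E]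
    (hhom : CkHomogeneous 1 N) (hloc : LocallyCompactSubset N) (hne : N.Nonempty) :
    ∃ p ∈ N, ∃ (P : E →L[ℝ] Euc (Module.finrank ℝ (paratingentSpan N p))) (g : Euc _ → E)
      (W : Set (Euc _)) (O : Set E) (K : ℝ), IsLocalSection N P g W O ∧ P p ∈ W ∧
        ∀ a ∈ W, ∀ b ∈ W, ‖g a - g b‖ ≤ K * ‖a - b‖ := by
  obtain ⟨p, hp, hreg⟩ := hloc.exists_isRegularPoint hne
  obtain ⟨P, hinj, hsurj⟩ := exists_clm_bijective_on_submodule (paratingentSpan N p)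
  obtain ⟨K, hK⟩ := (isBigO_sub_map_sub hinj).bound
  rw [nhdsWithin_prod_eq] at hK
  obtain ⟨S, hS, hanti⟩ := eventually_prod_self_iff'.1 hK
  obtain ⟨M, hMNS, hM, hMp⟩ := hloc.exists_isCompact_mem_nhdsWithin hp hS
  have hMN : M ⊆ N := hMNS.trans inter_subset_left
  have hantiM : ∀ x ∈ M, ∀ y ∈ M, ‖x - y‖ ≤ K * ‖P x - P y‖ := fun x hx y hy => by
    simpa only [map_sub] using hanti x (hMNS hx).2 y (hMNS hy).2
  have hpM : p ∈ M := mem_of_mem_nhdsWithin hp hMp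
  have hPM : P '' M ∈ 𝓝 (P p) := hreg.image_mem_nhds
    (fun q hq l => hhom.mem_paratingentAnnihilator_of_isFrechetNormal one_ne_zero hp
      hreg.mem_paratingentAnnihilator_of_isFrechetNormal hq) hsurj hM hMN hpM hMp hantiM
  obtain ⟨g, W, O, hg, hpW, hlip⟩ :=
    exists_isLocalSection_of_image_mem_nhds hMN hpM hMp hantiM hPM
  exact ⟨p, hp, P, g, W, O, K, hg, hpW, hlip⟩

theorem CkHomogeneous.isCkGraphSomewhere_one [FiniteDimensional ℝ E] (hhom : CkHomogeneous 1 N)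
    (hloc : LocallyCompactSubset N) (hne : N.Nonempty) : IsCkGraphSomewhere 1 N := by
  obtain ⟨p, hp, P, g, W, O, K, hg, hpW, hlip⟩ := hhom.exists_lipschitz_isLocalSection hloc hne
  refine ⟨_, P, g, W, O, hg, ⟨P p, hpW⟩, contDiffOn_one_of_forall_hasStrictFDerivAt
    hg.isOpen_source fun a ha => ?_⟩
  have hWa := hg.isOpen_source.mem_nhds ha
  have hlipa : (fun z : Euc _ × Euc _ => g z.1 - g z.2) =O[𝓝 (a, a)] fun z => z.1 - z.2 :=
    .of_bound K (by filter_upwards [prod_mem_nhds hWa hWa] with z hz using hlip _ hz.1 _ hz.2)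
  have hdim : Module.finrank ℝ (paratingentSpan N (g a)) =
      Module.finrank ℝ (Euc (Module.finrank ℝ (paratingentSpan N p))) := by
    rw [hhom.finrank_paratingentSpan_eq one_ne_zero (hg.apply_mem ha).1 hp,
      finrank_euclideanSpace_fin]
  exact exists_hasStrictFDerivAt_of_section (hg.tendsto_nhdsWithin ha)
    (hg.eventually_right_inv ha) (injective_on_paratingentSpan_of_section
      (hg.tendsto_nhdsWithin ha) (hg.eventually_right_inv ha) hlipa hdim)

/-! ### Injective `C^1` maps -/

theorem map_eq_zero_of_comp_surjective_of_finrank_range_le {V X R : Type*}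
    [AddCommGroup V] [Module ℝ V] [AddCommGroup X] [Module ℝ X] [FiniteDimensional ℝ X]
    [AddCommGroup R] [Module ℝ R] [FiniteDimensional ℝ R] {T : V →ₗ[ℝ] X} {Q : X →ₗ[ℝ] R}
    (hsurj : Function.Surjective (Q ∘ₗ T))
    (hrank : Module.finrank ℝ T.range ≤ Module.finrank ℝ R) {v : V} (hv : Q (T v) = 0) :
    T v = 0 := by
  let Q' : T.range →ₗ[ℝ] R := Q ∘ₗ T.range.subtype
  have hQ'surj : Function.Surjective Q' := fun r =>
    let ⟨w, hw⟩ := hsurj r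
    ⟨⟨T w, w, rfl⟩, hw⟩
  have hQ'inj : Function.Injective Q' :=
    (LinearMap.injective_iff_surjective_of_finrank_eq_finrank (hrank.antisymm
      (LinearMap.finrank_le_finrank_of_surjective hQ'surj))).2 hQ'surj
  have hTv : (⟨T v, v, rfl⟩ : T.range) = 0 := (map_eq_zero_iff Q' hQ'inj).1 hv
  exact congrArg Subtype.val hTv

theorem exists_clm_equiv_range_prod_ker [FiniteDimensional ℝ E] (A : E →L[ℝ] F) :
    ∃ (Q : F →L[ℝ] A.range) (π : E →L[ℝ] A.ker) (B : E ≃L[ℝ] A.range × A.ker),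
      (B : E →L[ℝ] A.range × A.ker) = (Q.comp A).prod π := by
  obtain ⟨Q, hQ⟩ := Submodule.ClosedComplemented.of_finiteDimensional A.range
  obtain ⟨π, hπ⟩ := Submodule.ClosedComplemented.of_finiteDimensional A.ker
  let B : E →L[ℝ] A.range × A.ker := (Q.comp A).prod π
  have hB : Function.Injective B := (injective_iff_map_eq_zero B).2 fun x hx => by
    have hQA : Q (A x) = 0 := congrArg Prod.fst hx
    have hAx : A x = 0 := congrArg Subtype.val ((hQ ⟨A x, x, rfl⟩).symm.trans hQA)
    exact congrArg Subtype.val ((hπ ⟨x, hAx⟩).symm.trans (congrArg Prod.snd hx))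
  have hdim : Module.finrank ℝ E = Module.finrank ℝ (A.range × A.ker) := by
    rw [Module.finrank_prod]
    exact (LinearMap.finrank_range_add_finrank_ker (A : E →ₗ[ℝ] F)).symm
  exact ⟨Q, π, (LinearMap.linearEquivOfInjective (B : E →ₗ[ℝ] A.range × A.ker) hB
    hdim).toContinuousLinearEquiv, rfl⟩

theorem exists_contDiffAt_rightInverse [CompleteSpace E] {k : ℕ} (hk : k ≠ 0) {f : E → F}
    {B : E ≃L[ℝ] F} {a : E} (hf : ContDiffAt ℝ k f a) (hB : HasFDerivAt f (B : E →L[ℝ] F) a) :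
    ∃ g : F → E, g (f a) = a ∧ ContDiffAt ℝ k g (f a) ∧ ∀ᶠ y in 𝓝 (f a), f (g y) = y :=
  have hk' : (k : WithTop ℕ∞) ≠ 0 := mod_cast hk
  ⟨hf.localInverse hB hk', hf.localInverse_apply_image hB hk', hf.to_localInverse hB hk',
    (hf.hasStrictFDerivAt' hB hk').eventually_right_inverse⟩

theorem fderiv_inr_eq_zero_of_comp_eventuallyEq_fst [FiniteDimensional ℝ E]
    [FiniteDimensional ℝ G] {f : E × F → G} {Q : G →L[ℝ] E} {y : E × F}
    (hf : DifferentiableAt ℝ f y) (hQ : ∀ᶠ z in 𝓝 y, Q (f z) = z.1)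
    (hrank : Module.finrank ℝ (fderiv ℝ f y).range ≤ Module.finrank ℝ E) (t : F) :
    fderiv ℝ f y (0, t) = 0 := by
  have hfst : Q.comp (fderiv ℝ f y) = ContinuousLinearMap.fst ℝ E F :=
    (Q.hasFDerivAt.comp y hf.hasFDerivAt).unique (hasFDerivAt_fst.congr_of_eventuallyEq hQ)
  have hQf : ∀ v, Q (fderiv ℝ f y v) = v.1 := DFunLike.congr_fun hfst
  exact map_eq_zero_of_comp_surjective_of_finrank_range_le (T := (fderiv ℝ f y : E × F →ₗ[ℝ] G))
    (Q := (Q : G →ₗ[ℝ] E)) (fun r => ⟨(r, 0), hQf (r, 0)⟩) hrank (hQf (0, t))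

theorem apply_add_inr_eq_of_fderiv_inr_eq_zero {f : E × F → G} {y : E × F} {ε : ℝ}
    (hf : ∀ z ∈ ball y ε, DifferentiableAt ℝ f z)
    (hzero : ∀ z ∈ ball y ε, ∀ t, fderiv ℝ f z (0, t) = 0) {t : F} (ht : ‖t‖ < ε) :
    f (y + (0, t)) = f y := by
  have hmem : ∀ s ∈ ball (0 : F) ε, y + ContinuousLinearMap.inr ℝ E F s ∈ ball y ε := fun s hs => by
    simpa using hs
  have hderiv : ∀ s ∈ ball (0 : F) ε,
      HasFDerivAt (fun s => f (y + ContinuousLinearMap.inr ℝ E F s)) (0 : F →L[ℝ] G) s :=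
    fun s hs => ((hf _ (hmem s hs)).hasFDerivAt.comp s
      ((ContinuousLinearMap.inr ℝ E F).hasFDerivAt.const_add y)).congr_fderiv
      (ContinuousLinearMap.ext fun r => hzero _ (hmem s hs) r)
  have hconst := isOpen_ball.is_const_of_fderiv_eq_zero (𝕜 := ℝ) (convex_ball _ _).isPreconnected
    (fun s hs => (hderiv s hs).differentiableAt.differentiableWithinAt)
    (fun s hs => (hderiv s hs).fderiv) (mem_ball_zero_iff.2 ht)
    (mem_ball_self ((norm_nonneg t).trans_lt ht))
  simpa only [map_zero, add_zero, ContinuousLinearMap.inr_apply] using hconst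

section MaximalRank

variable [FiniteDimensional ℝ F] {θ : E → F} {W : Set E}

theorem exists_mem_forall_finrank_range_fderiv_le (θ : E → F) (hne : W.Nonempty) :
    ∃ u ∈ W, ∀ v ∈ W, Module.finrank ℝ (fderiv ℝ θ v).range ≤
      Module.finrank ℝ (fderiv ℝ θ u).range := by
  have hfin : ((fun v => Module.finrank ℝ (fderiv ℝ θ v).range) '' W).Finite :=
    (finite_Iic (Module.finrank ℝ F)).subset
      (image_subset_iff.2 fun v _ => Submodule.finrank_le (fderiv ℝ θ v).range)
  obtain ⟨u, hu⟩ := hfin.exists_maximalFor' _ W hne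
  exact ⟨u, hu.prop, fun v hv => not_lt.1 (hu.not_gt hv)⟩

variable [FiniteDimensional ℝ E]

theorem exists_injOn_fiber_of_maximal_rank {u : E} (hW : IsOpen W) (hθ : ContDiffOn ℝ 1 θ W)
    (hu : u ∈ W) (hmax : ∀ v ∈ W, Module.finrank ℝ (fderiv ℝ θ v).range ≤
      Module.finrank ℝ (fderiv ℝ θ u).range) :
    ∃ (ψ : (fderiv ℝ θ u).ker → E) (ε : ℝ), 0 < ε ∧ InjOn ψ (ball 0 ε) ∧
      ∀ t ∈ ball 0 ε, ψ t ∈ W ∧ θ (ψ t) = θ u := by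
  have hdiff : ∀ v ∈ W, HasFDerivAt θ (fderiv ℝ θ v) v := fun v hv =>
    ((hθ.contDiffAt (hW.mem_nhds hv)).differentiableAt one_ne_zero).hasFDerivAt
  obtain ⟨Q, π, B, hB⟩ := exists_clm_equiv_range_prod_ker (fderiv ℝ θ u)
  -- In the coordinates `Φ` the component `Q ∘ θ` is linear, so maximality of the rank makes `θ`
  -- independent of the kernel coordinate.
  let Φ : E → (fderiv ℝ θ u).range × (fderiv ℝ θ u).ker := fun x => (Q (θ x), π x)
  have hΦ : ContDiffAt ℝ (1 : ℕ) Φ u :=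
    (Q.contDiff.contDiffAt.comp u (hθ.contDiffAt (hW.mem_nhds hu))).prodMk π.contDiff.contDiffAt
  have hΦB : HasFDerivAt Φ (B : E →L[ℝ] _) u :=
    hB ▸ (Q.hasFDerivAt.comp u (hdiff u hu)).prodMk π.hasFDerivAt
  obtain ⟨Ψ, hΨu, hΨ, hΦΨ⟩ := exists_contDiffAt_rightInverse one_ne_zero hΦ hΦB
  have hΨW : ∀ᶠ y in 𝓝 (Φ u), Ψ y ∈ W :=
    hΨ.continuousAt.eventually_mem (by simpa only [hΨu] using hW.mem_nhds hu)
  obtain ⟨ε, hε, hball⟩ := eventually_nhds_iff_ball.1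
    (hΦΨ.eventually_nhds.and (hΨW.and (hΨ.eventually (by simp))))
  have hcomp : ∀ y ∈ ball (Φ u) ε,
      HasFDerivAt (θ ∘ Ψ) ((fderiv ℝ θ (Ψ y)).comp (fderiv ℝ Ψ y)) y := fun y hy =>
    (hdiff _ (hball y hy).2.1).comp y
      ((hball y hy).2.2.differentiableAt (by simp)).hasFDerivAt
  have hzero : ∀ y ∈ ball (Φ u) ε, ∀ t, fderiv ℝ (θ ∘ Ψ) y (0, t) = 0 := by
    refine fun y hy => fderiv_inr_eq_zero_of_comp_eventuallyEq_fst (hcomp y hy).differentiableAt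
      ((hball y hy).1.mono fun z hz => congrArg Prod.fst hz) ?_
    rw [(hcomp y hy).fderiv]
    exact (Submodule.finrank_mono (LinearMap.range_comp_le_range _ _)).trans
      (hmax _ (hball y hy).2.1)
  have hmem : ∀ t ∈ ball (0 : (fderiv ℝ θ u).ker) ε, Φ u + (0, t) ∈ ball (Φ u) ε := fun t ht => by
    simpa using ht
  refine ⟨fun t => Ψ (Φ u + (0, t)), ε, hε, fun s hs t ht hst => ?_, fun t ht =>
    ⟨(hball _ (hmem t ht)).2.1, ?_⟩⟩
  · have hΦst := congrArg Φ hst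
    simp only [(hball _ (hmem s hs)).1.self_of_nhds, (hball _ (hmem t ht)).1.self_of_nhds] at hΦst
    exact congrArg Prod.snd (add_left_cancel hΦst)
  · simpa only [Function.comp_apply, hΨu] using apply_add_inr_eq_of_fderiv_inr_eq_zero
      (fun y hy => (hcomp y hy).differentiableAt) hzero (mem_ball_zero_iff.1 ht)

theorem exists_injective_fderiv_of_injOn (hW : IsOpen W) (hne : W.Nonempty)
    (hθ : ContDiffOn ℝ 1 θ W) (hinj : InjOn θ W) :
    ∃ u ∈ W, Function.Injective (fderiv ℝ θ u) := by
  obtain ⟨u, hu, hmax⟩ := exists_mem_forall_finrank_range_fderiv_le θ hne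
  obtain ⟨ψ, ε, hε, hψ, hfiber⟩ := exists_injOn_fiber_of_maximal_rank hW hθ hu hmax
  have hball : (ball (0 : (fderiv ℝ θ u).ker) ε).Subsingleton := fun s hs t ht =>
    hψ hs ht (hinj (hfiber s hs).1 (hfiber t ht).1
      ((hfiber s hs).2.trans (hfiber t ht).2.symm))
  have hker : Subsingleton (fderiv ℝ θ u).ker := by
    by_contra hnontriv
    rw [not_subsingleton_iff_nontrivial] at hnontriv
    exact (infinite_of_mem_nhds (0 : (fderiv ℝ θ u).ker) (ball_mem_nhds 0 hε)) hball.finite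
  exact ⟨u, hu, LinearMap.ker_eq_bot.1 (Submodule.subsingleton_iff_eq_bot.1 hker)⟩

theorem exists_clm_equiv_hasFDerivAt_of_injOn (hW : IsOpen W) (hne : W.Nonempty)
    (hθ : ContDiffOn ℝ 1 θ W) (hinj : InjOn θ W) (himage : IsOpen (θ '' W)) :
    ∃ u ∈ W, ∃ B : E ≃L[ℝ] F, HasFDerivAt θ (B : E →L[ℝ] F) u := by
  obtain ⟨u, hu, hker⟩ := exists_injective_fderiv_of_injOn hW hne hθ hinj
  have hdimH : dimH (θ '' W) ≤ dimH W := dimH_image_le_of_locally_lipschitzOn fun x hx =>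
    let ⟨C, t, ht, hlip⟩ := (hθ.contDiffAt (hW.mem_nhds hx)).exists_lipschitzOnWith
    ⟨C, t, mem_nhdsWithin_of_mem_nhds ht, hlip⟩
  rw [Real.dimH_of_mem_nhds (himage.mem_nhds (mem_image_of_mem θ hu)),
    Real.dimH_of_mem_nhds (hW.mem_nhds hu)] at hdimH
  have hdim : Module.finrank ℝ E = Module.finrank ℝ F :=
    (LinearMap.finrank_le_finrank_of_injective (f := (fderiv ℝ θ u : E →ₗ[ℝ] F)) hker).antisymm
      (mod_cast hdimH)
  exact ⟨u, hu, (LinearMap.linearEquivOfInjective (fderiv ℝ θ u : E →ₗ[ℝ] F) hker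
    hdim).toContinuousLinearEquiv,
    ((hθ.contDiffAt (hW.mem_nhds hu)).differentiableAt one_ne_zero).hasFDerivAt⟩

end MaximalRank

theorem IsLocalSection.exists_contDiffAt [FiniteDimensional ℝ F] [FiniteDimensional ℝ G]
    {π : E →L[ℝ] F} {σ : F → E} {W : Set F} {O : Set E} {π' : E →L[ℝ] G} {g : G → E} {W' : Set G}
    {O' : Set E} {k : ℕ} (hσ : IsLocalSection N π σ W O) (hg : IsLocalSection N π' g W' O')
    (hO : O' ⊆ O) (hne : W'.Nonempty) (hk : k ≠ 0) (hgk : ContDiffOn ℝ k g W') :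
    ∃ a ∈ W, ContDiffAt ℝ k σ a := by
  have hgO : ∀ b ∈ W', g b ∈ N ∩ O := fun b hb => ⟨(hg.apply_mem hb).1, hO (hg.apply_mem hb).2⟩
  have hσπ : ∀ b ∈ W', σ (π (g b)) = g b := fun b hb => hσ.apply_proj (hgO b hb)
  have himage : (π ∘ g) '' W' = W ∩ σ ⁻¹' O' := by
    refine Subset.antisymm ?_ fun a ha => ?_
    · rintro _ ⟨b, hb, rfl⟩
      exact ⟨hσ.proj_mem (hgO b hb), by
        simpa only [mem_preimage, Function.comp_apply, hσπ b hb] using (hg.apply_mem hb).2⟩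
    · obtain ⟨b, hb, hba⟩ := hg.image_eq.superset ⟨(hσ.apply_mem ha.1).1, ha.2⟩
      exact ⟨b, hb, by rw [Function.comp_apply, hba, hσ.right_inv a ha.1]⟩
  have hopen : IsOpen ((π ∘ g) '' W') :=
    himage ▸ hσ.continuousOn.isOpen_inter_preimage hσ.isOpen_source hg.isOpen_target
  have hinj : InjOn (π ∘ g) W' := fun b hb c hc hbc =>
    hg.injOn hb hc (by rw [← hσπ b hb, ← hσπ c hc]; exact congrArg σ hbc)
  have hθ : ContDiffOn ℝ k (π ∘ g) W' := π.contDiff.comp_contDiffOn hgk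
  obtain ⟨u, hu, B, hB⟩ := exists_clm_equiv_hasFDerivAt_of_injOn hg.isOpen_source hne
    (hθ.of_le (mod_cast Nat.one_le_iff_ne_zero.2 hk)) hinj hopen
  have hW'u := hg.isOpen_source.mem_nhds hu
  obtain ⟨h, hhu, hh, hright⟩ := exists_contDiffAt_rightInverse hk (hθ.contDiffAt hW'u) hB
  refine ⟨π (g u), hσ.proj_mem (hgO u hu), ContDiffAt.congr_of_eventuallyEq (f := g ∘ h)
    (ContDiffAt.comp _ (hhu.symm ▸ hgk.contDiffAt hW'u) hh) ?_⟩
  filter_upwards [hright, hh.continuousAt.eventually_mem (hhu.symm ▸ hW'u)] with a ha haW'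
  rw [Function.comp_apply, ← hσπ _ haW']
  exact congrArg σ ha.symm

/-! ### Prolongation to frames -/

theorem IsLocalSection.locallyCompactSubset [FiniteDimensional ℝ F] {π : E →L[ℝ] F} {g : F → E}
    {W : Set F} (h : IsLocalSection N π g W univ) : LocallyCompactSubset N := by
  have hproper : ProperSpace F := FiniteDimensional.proper ℝ F
  intro x hx
  obtain ⟨r, hr, hball⟩ := nhds_basis_closedBall.mem_iff.1
    (h.isOpen_source.mem_nhds (h.proj_mem ⟨hx, mem_univ x⟩))
  refine ⟨g '' closedBall (π x) r, ?_, (isCompact_closedBall _ r).image_of_continuousOn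
    (h.continuousOn.mono hball), π ⁻¹' ball (π x) r, isOpen_ball.preimage π.continuous,
    mem_ball_self hr, fun y hy => ?_⟩
  · rintro _ ⟨a, ha, rfl⟩
    exact (h.apply_mem (hball ha)).1
  · exact ⟨π y, ball_subset_closedBall hy.2, h.apply_proj ⟨hy.1, mem_univ y⟩⟩

/-- The frame lift of a parametrisation `g`: an endomorphism `M` of the parameter space, thought of
as a frame, is carried to the point `g a` by the derivative of `g`. -/
def frameLift (g : F → E) (z : F × (F →L[ℝ] F)) : E × (F →L[ℝ] E) :=
  (g z.1, (fderiv ℝ g z.1).comp z.2)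

/-- The frames of the parameter domain `W`: a point of `W` with a linear automorphism. -/
def frameDomain (W : Set F) : Set (F × (F →L[ℝ] F)) :=
  W ×ˢ {M | M.IsInvertible}

/-- The action of `H` on frames through its derivative, combined with the change of frame `C`. -/
def framePushforward (H : E → E) (C : F ≃L[ℝ] F) (z : E × (F →L[ℝ] E)) : E × (F →L[ℝ] E) :=
  (H z.1, (fderiv ℝ H z.1).comp (z.2.comp (C : F →L[ℝ] F)))

theorem contDiffOn_framePushforward {k : ℕ} {H : E → E} {U : Set E} (hU : IsOpen U)
    (hH : ContDiffOn ℝ (k + 1 : ℕ) H U) (C : F ≃L[ℝ] F) :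
    ContDiffOn ℝ k (framePushforward H C) (U ×ˢ univ) := by
  have hfst : MapsTo Prod.fst (U ×ˢ (univ : Set (F →L[ℝ] E))) U := fun z hz => hz.1
  have hfderiv : ContDiffOn ℝ k (fderiv ℝ H) U := hH.fderiv_of_isOpen hU (by norm_cast)
  exact ((hH.of_le (by norm_cast; exact k.le_succ)).comp contDiffOn_fst hfst).prodMk
    ((hfderiv.comp contDiffOn_fst hfst).clm_comp (contDiffOn_snd.clm_comp contDiffOn_const))

section Pushforward

variable {k : ℕ} {H H' : E → E} {U V : Set E}

theorem framePushforward_symm_framePushforward (h : IsCkDiffeoOn k H H' U V) (hk : k ≠ 0)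
    (C : F ≃L[ℝ] F) {z : E × (F →L[ℝ] E)} (hz : z.1 ∈ U) :
    framePushforward H' C.symm (framePushforward H C z) = z := by
  refine Prod.ext (h.left_inv hz) (ContinuousLinearMap.ext fun v => ?_)
  simpa [framePushforward] using DFunLike.congr_fun (h.fderiv_symm_comp_fderiv hk hz) (z.2 v)

theorem isCkDiffeoOn_framePushforward (h : IsCkDiffeoOn (k + 1) H H' U V) (C : F ≃L[ℝ] F) :
    IsCkDiffeoOn k (framePushforward H C) (framePushforward H' C.symm)
      (U ×ˢ univ) (V ×ˢ univ) := by
  have hk : k + 1 ≠ 0 := k.succ_ne_zero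
  obtain ⟨hU, hV, hH, hH', hUV, hVU, -⟩ := id h
  exact ⟨hU.prod isOpen_univ, hV.prod isOpen_univ, contDiffOn_framePushforward hU hH C,
    contDiffOn_framePushforward hV hH' C.symm, fun z hz => ⟨hUV hz.1, mem_univ _⟩,
    fun z hz => ⟨hVU hz.1, mem_univ _⟩,
    fun z hz => framePushforward_symm_framePushforward h hk C hz.1,
    fun z hz => framePushforward_symm_framePushforward h.symm hk C.symm hz.1⟩

end Pushforward

section FrameLift

variable {π : E →L[ℝ] F} {g : F → E} {W : Set F}

theorem comp_fderiv_eq_id_of_section (hW : IsOpen W) (hg : ContDiffOn ℝ 1 g W)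
    (hπ : ∀ a ∈ W, π (g a) = a) {a : F} (ha : a ∈ W) :
    π.comp (fderiv ℝ g a) = ContinuousLinearMap.id ℝ F := by
  have hga := (hg.contDiffAt (hW.mem_nhds ha)).differentiableAt one_ne_zero
  exact (π.hasFDerivAt.comp a hga.hasFDerivAt).unique
    ((hasFDerivAt_id a).congr_of_eventuallyEq (eventually_of_mem (hW.mem_nhds ha) hπ))

theorem isOpen_frameDomain [CompleteSpace F] (hW : IsOpen W) : IsOpen (frameDomain W) :=
  hW.prod ContinuousLinearEquiv.isOpen

theorem isLocalSection_frameLift [CompleteSpace F] (hW : IsOpen W) (hg : ContDiffOn ℝ 1 g W)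
    (hπ : ∀ a ∈ W, π (g a) = a) :
    IsLocalSection (frameLift g '' frameDomain W)
      (π.prodMap (ContinuousLinearMap.compL ℝ F E F π)) (frameLift g) (frameDomain W) univ where
  isOpen_source := isOpen_frameDomain hW
  isOpen_target := isOpen_univ
  continuousOn := by
    have hfst : MapsTo Prod.fst (frameDomain W) W := fun z hz => hz.1
    exact (hg.continuousOn.comp continuousOn_fst hfst).prodMk
      (((hg.continuousOn_fderiv_of_isOpen hW le_rfl).comp continuousOn_fst hfst).clm_comp
        continuousOn_snd)
  right_inv z hz := by
    refine Prod.ext (hπ z.1 hz.1) ?_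
    change π.comp ((fderiv ℝ g z.1).comp z.2) = z.2
    rw [← ContinuousLinearMap.comp_assoc, comp_fderiv_eq_id_of_section hW hg hπ hz.1,
      ContinuousLinearMap.id_comp]
  image_eq := (inter_univ _).symm

variable [FiniteDimensional ℝ F] {k : ℕ} {H H' : E → E} {U V : Set E}

theorem exists_fderiv_comp_fderiv_eq (hW : IsOpen W) (hg : ContDiffOn ℝ 1 g W)
    (hπ : ∀ a ∈ W, π (g a) = a) (hH : IsCkDiffeoOn k H H' U V) (hk : k ≠ 0)
    (hmaps : ∀ x ∈ U, x ∈ g '' W → H x ∈ g '' W) {a b : F} (ha : a ∈ W) (hb : b ∈ W)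
    (haU : g a ∈ U) (hab : H (g a) = g b) :
    ∃ R : F ≃L[ℝ] F, (fderiv ℝ H (g a)).comp (fderiv ℝ g a) =
      (fderiv ℝ g b).comp (R : F →L[ℝ] F) := by
  have hdiff : ∀ c ∈ W, HasFDerivAt g (fderiv ℝ g c) c := fun c hc =>
    ((hg.contDiffAt (hW.mem_nhds hc)).differentiableAt one_ne_zero).hasFDerivAt
  let T := (fderiv ℝ H (g a)).comp (fderiv ℝ g a)
  have hHg : HasFDerivAt (H ∘ g) T a :=
    (hH.hasStrictFDerivAt hk haU).hasFDerivAt.comp a (hdiff a ha)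
  have hb' : π ((H ∘ g) a) = b := by rw [Function.comp_apply, hab, hπ b hb]
  have hfactor : (fderiv ℝ g b).comp (π.comp T) = T := by
    refine (((hb'.symm ▸ hdiff b hb : HasFDerivAt g (fderiv ℝ g b) (π ((H ∘ g) a))).comp a
      (π.hasFDerivAt.comp a hHg)).congr_of_eventuallyEq ?_).unique hHg
    filter_upwards [hW.mem_nhds ha, (hdiff a ha).continuousAt.eventually_mem
      (hH.isOpen_source.mem_nhds haU)] with c hc hcU
    obtain ⟨c', hc', hcc'⟩ := hmaps (g c) hcU (mem_image_of_mem g hc)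
    simp only [Function.comp_apply, ← hcc', hπ c' hc']
  have hginj : Function.Injective (fderiv ℝ g a) := Function.LeftInverse.injective fun v =>
    DFunLike.congr_fun (comp_fderiv_eq_id_of_section hW hg hπ ha) v
  have hTinj : Function.Injective T := (hH.fderiv_injective hk haU).comp hginj
  have hRinj : Function.Injective (π.comp T) := .of_comp (f := fderiv ℝ g b) <| by
    rwa [← ContinuousLinearMap.coe_comp, hfactor]
  exact ⟨(LinearMap.linearEquivOfInjective (π.comp T : F →ₗ[ℝ] F) hRinj
    rfl).toContinuousLinearEquiv, hfactor.symm⟩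

theorem framePushforward_mem_image_frameLift (hW : IsOpen W) (hg : ContDiffOn ℝ 1 g W)
    (hπ : ∀ a ∈ W, π (g a) = a) (hH : IsCkDiffeoOn k H H' U V) (hk : k ≠ 0)
    (hmaps : ∀ x ∈ U, x ∈ g '' W → H x ∈ g '' W) (C : F ≃L[ℝ] F) {z : E × (F →L[ℝ] E)}
    (hzU : z ∈ U ×ˢ (univ : Set (F →L[ℝ] E))) (hz : z ∈ frameLift g '' frameDomain W) :
    framePushforward H C z ∈ frameLift g '' frameDomain W := by
  obtain ⟨⟨a, M⟩, ⟨ha, hM⟩, rfl⟩ := hz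
  obtain ⟨b, hb, hab⟩ := hmaps (g a) hzU.1 (mem_image_of_mem g ha)
  obtain ⟨R, hR⟩ := exists_fderiv_comp_fderiv_eq hW hg hπ hH hk hmaps ha hb hzU.1 hab.symm
  refine ⟨(b, (R : F →L[ℝ] F).comp (M.comp (C : F →L[ℝ] F))), ⟨hb, ?_⟩, Prod.ext hab ?_⟩
  · exact (ContinuousLinearMap.isInvertible_equiv (f := R)).comp
      (hM.comp ContinuousLinearMap.isInvertible_equiv)
  · ext v
    exact (DFunLike.congr_fun hR (M (C v))).symm

theorem CkHomogeneous.image_frameLift (hW : IsOpen W) (hg : ContDiffOn ℝ 1 g W)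
    (hπ : ∀ a ∈ W, π (g a) = a) (hhom : CkHomogeneous (k + 1) (g '' W)) :
    CkHomogeneous k (frameLift g '' frameDomain W) := by
  have hk : k + 1 ≠ 0 := k.succ_ne_zero
  refine ckHomogeneous_iff.2 ?_
  rintro _ ⟨⟨a, _⟩, ⟨ha, M, rfl⟩, rfl⟩ _ ⟨⟨b, _⟩, ⟨hb, M', rfl⟩, rfl⟩
  obtain ⟨U, V, H, H', hH, haU, hab, hiff⟩ := ckHomogeneous_iff.1 hhom (g a)
    (mem_image_of_mem g ha) (g b) (mem_image_of_mem g hb)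
  have hmaps : ∀ x ∈ U, x ∈ g '' W → H x ∈ g '' W := fun x hx => (hiff x hx).1
  have hmaps' : ∀ y ∈ V, y ∈ g '' W → H' y ∈ g '' W := fun y hy hyN =>
    (hiff (H' y) (hH.symm.mapsTo hy)).2 (by rwa [hH.symm.left_inv hy])
  obtain ⟨R, hR⟩ := exists_fderiv_comp_fderiv_eq hW hg hπ hH hk hmaps ha hb haU hab
  let C : F ≃L[ℝ] F := M'.trans (M.trans R).symm
  have hC := isCkDiffeoOn_framePushforward hH C
  refine ⟨_, _, _, _, hC, ⟨haU, mem_univ _⟩, Prod.ext hab ?_, fun z hz => ⟨fun hzN => ?_,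
    fun hzN => ?_⟩⟩
  · ext v
    simpa [C, framePushforward, frameLift] using DFunLike.congr_fun hR (M (C v))
  · exact framePushforward_mem_image_frameLift hW hg hπ hH hk hmaps C hz hzN
  · rw [← hC.left_inv hz]
    exact framePushforward_mem_image_frameLift hW hg hπ hH.symm hk hmaps' C.symm
      (hC.mapsTo hz) hzN

end FrameLift

/-! ### Bootstrapping the regularity -/

theorem contDiffAt_fderiv_of_contDiffAt_frameLift {k : ℕ} {g : F → E} {a : F} {M : F →L[ℝ] F}
    (hM : M.IsInvertible) (h : ContDiffAt ℝ k (frameLift g) (a, M)) :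
    ContDiffAt ℝ k (fderiv ℝ g) a := by
  obtain ⟨e, rfl⟩ := hM
  have hframe : ContDiffAt ℝ k (fun b => (fderiv ℝ g b).comp (e : F →L[ℝ] F)) a :=
    (h.comp a (contDiffAt_id.prodMk contDiffAt_const)).snd
  refine (hframe.clm_comp (contDiffAt_const (c := (e.symm : F →L[ℝ] F)))).congr_of_eventuallyEq
    (.of_forall fun b => ?_)
  ext v
  simp

theorem exists_isOpen_contDiffOn_succ {k : ℕ} {g : F → E} {W : Set F} {a : F} (hW : IsOpen W)
    (hg : DifferentiableOn ℝ g W) (ha : a ∈ W) (hfderiv : ContDiffAt ℝ k (fderiv ℝ g) a) :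
    ∃ W' ⊆ W, IsOpen W' ∧ a ∈ W' ∧ ContDiffOn ℝ (k + 1 : ℕ) g W' := by
  obtain ⟨W', hW', hopen, haW'⟩ := _root_.eventually_nhds_iff.1
    ((hfderiv.eventually (by simp)).and (hW.mem_nhds ha))
  refine ⟨W', fun b hb => (hW' b hb).2, hopen, haW', ?_⟩
  push_cast
  exact (contDiffOn_succ_iff_fderiv_of_isOpen hopen).2 ⟨hg.mono fun b hb => (hW' b hb).2, by simp,
    fun b hb => (hW' b hb).1.contDiffWithinAt⟩

theorem IsCkGraphSomewhere.succ_of_frameLift {k m : ℕ} {π : E →L[ℝ] Euc m} {g : Euc m → E}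
    {W : Set (Euc m)} {O : Set E} (hk : k ≠ 0) (hg : IsLocalSection N π g W O)
    (hgC1 : ContDiffOn ℝ 1 g W)
    (hframes : IsCkGraphSomewhere k (frameLift g '' frameDomain W)) :
    IsCkGraphSomewhere (k + 1) N := by
  obtain ⟨n, ϖ, τ, X, Y, hτ, hX, hτk⟩ := hframes
  obtain ⟨⟨a, M⟩, ⟨ha, hM⟩, haM⟩ :=
    (isLocalSection_frameLift hg.isOpen_source hgC1 hg.right_inv).exists_contDiffAt hτ
      (subset_univ Y) hX hk hτk
  obtain ⟨W', hsub, hW', haW', hgW'⟩ := exists_isOpen_contDiffOn_succ hg.isOpen_source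
    (hgC1.differentiableOn one_ne_zero) ha (contDiffAt_fderiv_of_contDiffAt_frameLift hM haM)
  exact ⟨m, π, g, W', _, hg.mono hW' hsub, ⟨a, haW'⟩, hgW'⟩

universe u

theorem CkHomogeneous.isCkGraphSomewhere {k : ℕ} (hk : 1 ≤ k) :
    ∀ {V : Type u} [NormedAddCommGroup V] [NormedSpace ℝ V] [FiniteDimensional ℝ V] {N : Set V},
      CkHomogeneous k N → LocallyCompactSubset N → N.Nonempty → IsCkGraphSomewhere k N := by
  induction k, hk using Nat.le_induction with
  | base => exact fun hhom hloc hne => hhom.isCkGraphSomewhere_one hloc hne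
  | succ k hk ih =>
    intro V _ _ _ N hhom hloc hne
    obtain ⟨m, π, g, W, O, hg, hWne, hgC1⟩ :=
      (hhom.of_le (by lia)).isCkGraphSomewhere_one hloc hne
    have hgW : CkHomogeneous (k + 1) (g '' W) := hg.image_eq ▸ hhom.inter hg.isOpen_target
    have hframes := isLocalSection_frameLift hg.isOpen_source hgC1 hg.right_inv
    have hdomain : (frameDomain W).Nonempty :=
      hWne.prod ⟨_, ContinuousLinearMap.isInvertible_equiv (f := .refl ℝ (Euc m))⟩
    exact .succ_of_frameLift (by lia) hg hgC1
      (ih (.image_frameLift hg.isOpen_source hgC1 hg.right_inv hgW) hframes.locallyCompactSubset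
        (hdomain.image _))

/-! ### Straightening a graph -/

theorem isCkDiffeoOn_sub_section_add {k : ℕ} {π : E →L[ℝ] F} {g : F → E} {s : F →L[ℝ] E}
    {W : Set F} (hW : IsOpen W) (hg : ContDiffOn ℝ k g W) (hπ : ∀ a ∈ W, π (g a) = a)
    (hs : ∀ a, π (s a) = a) :
    IsCkDiffeoOn k (fun x => x - g (π x) + s (π x)) (fun y => y - s (π y) + g (π y))
      (π ⁻¹' W) (π ⁻¹' W) := by
  have hopen : IsOpen (π ⁻¹' W) := hW.preimage π.continuous
  have hgπ : ContDiffOn ℝ k (fun x => g (π x)) (π ⁻¹' W) :=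
    hg.comp π.contDiff.contDiffOn (mapsTo_preimage π W)
  have hsπ : ContDiffOn ℝ k (fun x => s (π x)) (π ⁻¹' W) := (s.comp π).contDiff.contDiffOn
  have hforward : ∀ x ∈ π ⁻¹' W, π (x - g (π x) + s (π x)) = π x := fun x hx => by
    rw [map_add, map_sub, hs, hπ _ hx, sub_add_cancel]
  have hbackward : ∀ y ∈ π ⁻¹' W, π (y - s (π y) + g (π y)) = π y := fun y hy => by
    rw [map_add, map_sub, hs, hπ _ hy, sub_add_cancel]
  refine ⟨hopen, hopen, (contDiffOn_id.sub hgπ).add hsπ, (contDiffOn_id.sub hsπ).add hgπ,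
    fun x hx => ?_, fun y hy => ?_, fun x hx => ?_, fun y hy => ?_⟩
  · rwa [mem_preimage, hforward x hx]
  · rwa [mem_preimage, hbackward y hy]
  · simp only [hforward x hx]
    abel
  · simp only [hbackward y hy]
    abel

theorem IsLocalSection.mem_iff_sub_add_mem_range {π : E →L[ℝ] F} {g : F → E} {s : F →L[ℝ] E}
    {W : Set F} {O : Set E} (h : IsLocalSection N π g W O) (hs : ∀ a, π (s a) = a) {x : E}
    (hxO : x ∈ O) (hxW : π x ∈ W) : x ∈ N ↔ x - g (π x) + s (π x) ∈ s.range := by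
  refine ⟨fun hxN => ⟨π x, ?_⟩, ?_⟩
  · simp [h.apply_proj ⟨hxN, hxO⟩]
  · rintro ⟨a, ha : s a = _⟩
    have hπa := congrArg π ha
    rw [hs, map_add, map_sub, hs, h.right_inv _ hxW, sub_add_cancel] at hπa
    rw [hπa, right_eq_add, sub_eq_zero] at ha
    exact ha ▸ (h.apply_mem hxW).1

theorem exists_clm_equiv_mem_iff_coord_eq_zero {d : ℕ} (T : Submodule ℝ (Euc d)) :
    ∃ (m : ℕ) (L : Euc d ≃L[ℝ] Euc d), ∀ x, x ∈ T ↔ ∀ i : Fin d, m ≤ (i : ℕ) → L x i = 0 := by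
  obtain ⟨m, hm⟩ : ∃ m, Module.finrank ℝ T = m := ⟨_, rfl⟩
  obtain ⟨n, hn⟩ : ∃ n, Module.finrank ℝ Tᗮ = n := ⟨_, rfl⟩
  obtain rfl : m + n = d := by
    rw [← hm, ← hn, T.finrank_add_finrank_orthogonal, finrank_euclideanSpace_fin]
  let e : Euc (m + n) ≃L[ℝ] T × Tᗮ :=
    (T.prodEquivOfIsCompl Tᗮ T.isCompl_orthogonal).symm.toContinuousLinearEquiv
  let c : (T × Tᗮ) ≃L[ℝ] Euc m × Euc n :=
    .prodCongr (.ofFinrankEq (by simp [hm])) (.ofFinrankEq (by simp [hn]))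
  let L := (e.trans c).trans EuclideanSpace.finAddEquivProd.symm
  have hL : ∀ x, EuclideanSpace.finAddEquivProd (L x) = c (e x) := fun x =>
    EuclideanSpace.finAddEquivProd.apply_symm_apply _
  have hsnd : ∀ x j, L x (Fin.natAdd m j) = (c (e x)).2 j := fun x j => by
    rw [← hL]
    rfl
  have hmem : ∀ x, x ∈ T ↔ (c (e x)).2 = 0 := fun x => by
    rw [← T.prodEquivOfIsCompl_symm_apply_snd_eq_zero Tᗮ T.isCompl_orthogonal]
    exact (ContinuousLinearEquiv.map_eq_zero_iff _).symm
  refine ⟨m, L, fun x => (hmem x).trans ⟨fun hx i => ?_, fun hx => ?_⟩⟩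
  · refine Fin.addCases (fun j hj => absurd j.2 (not_lt.2 (by simpa using hj))) (fun j _ => ?_) i
    rw [hsnd, hx]
    rfl
  · ext j
    rw [← hsnd, hx _ (by simp)]
    rfl

theorem IsCkGraphSomewhere.exists_straightening {k d : ℕ} {N : Set (Euc d)}
    (hN : IsCkGraphSomewhere k N) (hk : 1 ≤ k) :
    ∃ q ∈ N, ∃ (U V : Set (Euc d)) (φ φ' : Euc d → Euc d) (j : ℕ), IsCkDiffeoOn k φ φ' U V ∧
      q ∈ U ∧ ∀ x ∈ U, x ∈ N ↔ ∀ i : Fin d, j ≤ (i : ℕ) → φ x i = 0 := by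
  obtain ⟨m, π, g, W, O, hg, ⟨a, ha⟩, hgk⟩ := hN
  have hs : ∀ b, π (fderiv ℝ g a b) = b := DFunLike.congr_fun (comp_fderiv_eq_id_of_section
    hg.isOpen_source (hgk.of_le (mod_cast hk)) hg.right_inv ha)
  obtain ⟨j, L, hL⟩ := exists_clm_equiv_mem_iff_coord_eq_zero (fderiv ℝ g a).range
  have hφ := ((isCkDiffeoOn_sub_section_add hg.isOpen_source hgk hg.right_inv hs).inter_preimage
    hg.isOpen_target isOpen_univ).trans (IsCkDiffeoOn.of_continuousLinearEquiv L)
  refine ⟨g a, (hg.apply_mem ha).1, _, _, _, _, j, hφ, ?_, fun x hx => ?_⟩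
  · exact ⟨⟨by rwa [mem_preimage, hg.right_inv a ha], (hg.apply_mem ha).2, mem_univ _⟩, mem_univ _⟩
  · exact (hg.mem_iff_sub_add_mem_range hs hx.1.2.1 hx.1.1).trans (hL _)

end Development

/-- **Corollary 1.3.** For any integer `k ≥ 1`, every locally compact subset of `ℝ^d` that is
`C^k` homogeneous is a `C^k` submanifold of `ℝ^d`. -/
theorem locally_compact_ck_homogeneous_is_ck_submanifold (d k : ℕ) (hd : 1 ≤ d) (hk : 1 ≤ k)
    (N : Set (Euc d)) (hloc : LocallyCompactSubset N) (hhom : CkHomogeneous k N) :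
    IsCkSubmanifold k d N := by
  intro p hp
  obtain ⟨q, hq, U, V, φ, φ', j, hφ, hqU, hφN⟩ :=
    (hhom.isCkGraphSomewhere hk hloc ⟨p, hp⟩).exists_straightening hk
  obtain ⟨X, Y, H, H', hH, hpX, rfl, hHN⟩ := ckHomogeneous_iff.1 hhom p hp q hq
  have hφH := hH.trans hφ
  refine ⟨_, _, _, _, j, hφH, ⟨hpX, hqU⟩, ?_⟩
  rw [inter_comm _ {x | _}, hφH.image_inter_eq_iff]
  exact fun x hx => (hHN x hx.1).trans (hφN (H x) hx.2)
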